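/- There exist constants b > 0 and γ₀ > 0, depending only on the dimension d, such that for every 0 < γ ≤ γ₀, every finite rectangle Λ ⊂ ℤ^d, and every δ with 0 < δ ≤ γ^{1/4}/4, the minimum level spacing of H(u) satisfies P( min_{α ≠ β} |E_α − E_β| < δ ) ≤ |Λ|·exp(−b·|log γ|^{3/4}·|log δ|^{1/4}), where E_1, …, E_{2|Λ|} are the eigenvalues of H(u) counted with multiplicity and the minimum is over pairs of distinct indices. -/

import Mathlib

open Matrix MeasureTheory

/-- The uniform probability measure on `[-1,1]`. -/
noncomputable def unif : Measure ℝ :=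
  ((2 : NNReal))⁻¹ • (volume.restrict (Set.Icc (-1 : ℝ) 1))

instance : IsProbabilityMeasure unif := by
  constructor
  rw [unif, Measure.smul_apply, Measure.restrict_apply_univ, Real.volume_Icc]
  norm_num
  rw [ENNReal.smul_def]
  simp [ENNReal.inv_mul_cancel]

/-- The product of uniform measures on `[-1,1]^ι` (i.i.d. uniform random variables). -/
noncomputable def unifPi (ι : Type*) [Fintype ι] : Measure (ι → ℝ) :=
  Measure.pi fun _ => unif

/-- The ℓ¹ distance `|x-y| = Σᵢ |xᵢ-yᵢ|` on `ℤ^d`, as a natural number. -/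
def dist1 {d : ℕ} (x y : Fin d → ℤ) : ℕ := ∑ i, (x i - y i).natAbs

/-- The random block Hamiltonian: diagonal 2×2 block `[[u_x,1],[1,-u_x]]` at each
position `x ∈ Λ`, and block `γ·I₂` between nearest-neighbor positions. -/
noncomputable def Ham (d : ℕ) (γ : ℝ) (Λ : Finset (Fin d → ℤ)) (u : {x // x ∈ Λ} → ℝ) :
    Matrix ({x // x ∈ Λ} × Fin 2) ({x // x ∈ Λ} × Fin 2) ℝ := fun s t =>
  if s.1 = t.1 then
    (if s.2 = t.2 then (if s.2 = 0 then u s.1 else -u s.1) else 1)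
  else if dist1 (s.1 : Fin d → ℤ) (t.1 : Fin d → ℤ) = 1 then
    (if s.2 = t.2 then γ else 0)
  else 0

/-!
The Hadamard rotation of every `2 × 2` block turns `u x` into the coefficient of the flip `D_x` of
the internal index at `x`, a perturbation of rank two. Hence `det (H(u) - z)` is quadratic in each
`u x`, and a quadratic is rarely much smaller than its values at three probe points. At the
remaining, typical potentials this comparison, applied to one and to two sites, bounds the block
minors of the Green function, which rules out almost eigenvectors: this is a Wegner estimate. Since
the almost eigenspaces at an energy lose at most two dimensions when one `u x` changes, the estimate
can be iterated, and a narrow energy window with forty eigenvalues is very unlikely.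

If two eigenvalues nearly coincide, then, by pigeonhole over energy scales each of which is the
twelfth power of the previous one, they belong to a cluster of fewer than forty eigenvalues that is
much tighter than its distance to the rest of the spectrum. Let `W` be its spectral subspace. If
some `D_x` is not nearly scalar on `W`, then changing `u x` splits the cluster to first order.
Otherwise every form `⟨ψ, D_x ψ⟩` nearly vanishes on `W`, because it is isotropic at a vector of
`W` orthogonal to the basis state `(x, 0)`. The simultaneous flip of all sites then sends `ψ ∈ W`
almost into `Wᗮ`, and commuting it with `H(u)` shows that, for the reduced resolvent `R`, some
`⟨D_x ψ, R D_y ψ⟩` is not small: changing `u y` moves `W` so that the form of `D_x` no longer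
vanishes. In both cases the cluster persists only for a small set of values of a single `u x`.

The exponents are uniform, so level spacings below `δ` have probability at most `|Λ| δ ^ c` for an
absolute constant `c > 0`. This beats the asserted bound because `|log γ| ≤ 4 |log δ|`.
-/

namespace BlockAnderson

section Resolvent

variable {n : Type*} [Fintype n] [DecidableEq n] {H G : Matrix n n ℂ} {z : ℂ}

lemma isUnit_sub_smul_one (hH : H.IsHermitian) (hz : z.im ≠ 0) : IsUnit (H - z • 1) := by
  have hmem : z ∉ spectrum ℂ H := by
    rw [hH.spectrum_eq_image_range]
    rintro ⟨r, -, rfl⟩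
    exact hz (Complex.ofReal_im r)
  rw [spectrum.notMem_iff, Algebra.algebraMap_eq_smul_one] at hmem
  simpa using hmem.neg

lemma ward_identity (hH : H.IsHermitian) (hG : (H - z • 1) * G = 1) :
    G - Gᴴ = (z - star z) • (Gᴴ * G) := by
  have hG' : Gᴴ * (H - star z • 1) = 1 := by
    simpa [conjTranspose_mul, hH.eq] using congrArg conjTranspose hG
  calc G - Gᴴ = Gᴴ * (H - star z • 1) * G - Gᴴ * ((H - z • 1) * G) := by
        rw [hG', hG, one_mul, mul_one]
    _ = (z - star z) • (Gᴴ * G) := by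
        simp only [mul_sub, sub_mul, mul_assoc, mul_smul_comm, smul_mul_assoc, mul_one, one_mul,
          sub_smul]
        abel

lemma im_resolvent_diag (hH : H.IsHermitian) (hG : (H - z • 1) * G = 1) (i : n) :
    (G i i).im = z.im * ∑ j, ‖G j i‖ ^ 2 := by
  have hsum : (Gᴴ * G) i i = ((∑ j, ‖G j i‖ ^ 2 : ℝ) : ℂ) := by
    simp [mul_apply, Complex.conj_mul']
  have h := congrArg Complex.im (congrFun₂ (ward_identity hH hG) i i)
  rw [Matrix.smul_apply, hsum, smul_eq_mul, Complex.im_mul_ofReal] at h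
  simp only [Matrix.sub_apply, conjTranspose_apply, Complex.star_def, Complex.sub_im,
    Complex.conj_im] at h
  linarith

lemma im_mul_norm_sq_le_norm_diag (hH : H.IsHermitian) (hz : 0 ≤ z.im)
    (hG : (H - z • 1) * G = 1) (j i : n) : z.im * ‖G j i‖ ^ 2 ≤ ‖G i i‖ :=
  calc z.im * ‖G j i‖ ^ 2 ≤ z.im * ∑ k, ‖G k i‖ ^ 2 := by
        gcongr
        exact Finset.single_le_sum (f := fun k => ‖G k i‖ ^ 2) (fun _ _ => by positivity)
          (Finset.mem_univ j)
    _ = (G i i).im := (im_resolvent_diag hH hG i).symm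
    _ ≤ ‖G i i‖ := (le_abs_self _).trans (Complex.abs_im_le_norm _)

omit [DecidableEq n] in
lemma sum_norm_mulVec_sq_le (A : Matrix n n ℂ) (v : n → ℂ) :
    ∑ i, ‖(A *ᵥ v) i‖ ^ 2 ≤ (∑ i, ∑ j, ‖A i j‖ ^ 2) * ∑ j, ‖v j‖ ^ 2 := by
  rw [Finset.sum_mul]
  gcongr with i
  calc ‖(A *ᵥ v) i‖ ^ 2 ≤ (∑ j, ‖A i j‖ * ‖v j‖) ^ 2 := by
        gcongr
        simpa only [mulVec, dotProduct, norm_mul] using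
          norm_sum_le Finset.univ fun j => A i j * v j
    _ ≤ (∑ j, ‖A i j‖ ^ 2) * ∑ j, ‖v j‖ ^ 2 := Finset.sum_mul_sq_le_sq_mul_sq _ _ _

lemma im_le_mul_sum_norm_resolvent_diag (hH : H.IsHermitian) (hz : 0 ≤ z.im)
    (hG : (H - z • 1) * G = 1) {v : n → ℂ} (hv : v ≠ 0) {c : ℝ}
    (hc : ∑ i, ‖((H - z • 1) *ᵥ v) i‖ ^ 2 ≤ c * ∑ i, ‖v i‖ ^ 2) :
    z.im ≤ c * ∑ i, ‖G i i‖ := by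
  have hpos : 0 < ∑ i, ‖v i‖ ^ 2 := by
    obtain ⟨i, hi⟩ := Function.ne_iff.mp hv
    exact Finset.sum_pos' (fun _ _ => by positivity)
      ⟨i, Finset.mem_univ i, by have := norm_pos_iff.mpr hi; positivity⟩
  have hGv : G *ᵥ ((H - z • 1) *ᵥ v) = v := by
    rw [mulVec_mulVec, mul_eq_one_comm.mp hG, one_mulVec]
  have hfrob : z.im * ∑ i, ∑ j, ‖G i j‖ ^ 2 ≤ ∑ i, ‖G i i‖ := by
    rw [Finset.sum_comm, Finset.mul_sum]
    gcongr with i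
    rw [← im_resolvent_diag hH hG i]
    exact (le_abs_self _).trans (Complex.abs_im_le_norm _)
  refine le_of_mul_le_mul_right ?_ hpos
  calc z.im * ∑ i, ‖v i‖ ^ 2
      ≤ z.im * ((∑ i, ∑ j, ‖G i j‖ ^ 2) * ∑ i, ‖((H - z • 1) *ᵥ v) i‖ ^ 2) := by
        gcongr
        conv_lhs => rw [← hGv]
        exact sum_norm_mulVec_sq_le G _
    _ ≤ (∑ i, ‖G i i‖) * (c * ∑ i, ‖v i‖ ^ 2) := by
        rw [← mul_assoc]
        gcongr
    _ = c * (∑ i, ‖G i i‖) * ∑ i, ‖v i‖ ^ 2 := by ring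

lemma exists_im_le_mul_norm_resolvent_diag (hH : H.IsHermitian) (hz : 0 ≤ z.im)
    (hG : (H - z • 1) * G = 1) {v : n → ℂ} (hv : v ≠ 0) {c : ℝ}
    (hc : ∑ i, ‖((H - z • 1) *ᵥ v) i‖ ^ 2 ≤ c * ∑ i, ‖v i‖ ^ 2) :
    ∃ i, z.im ≤ c * Fintype.card n * ‖G i i‖ := by
  obtain ⟨i₀, -⟩ := Function.ne_iff.mp hv
  suffices h : ∑ _i : n, z.im ≤ ∑ i, c * Fintype.card n * ‖G i i‖ by
    obtain ⟨i, -, hi⟩ := Finset.exists_le_of_sum_le ⟨i₀, Finset.mem_univ i₀⟩ h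
    exact ⟨i, hi⟩
  rw [Finset.sum_const, Finset.card_univ, nsmul_eq_mul, ← Finset.mul_sum, mul_comm c, mul_assoc]
  gcongr
  exact im_le_mul_sum_norm_resolvent_diag hH hz hG hv hc

end Resolvent

section RotatedHamiltonian

variable {ι : Type*} [DecidableEq ι]

/-- The block Hamiltonian with hopping matrix `K` and potential `u`, in the basis where the
off-diagonal Pauli matrix of every block is diagonal: it acts on site `x` by
`[[1, u x], [u x, -1]]`, the two states of a site being indexed by `Bool`. -/
def rotHam (K : Matrix ι ι ℝ) (u : ι → ℝ) : Matrix (ι × Bool) (ι × Bool) ℝ := fun s t =>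
  (if s.2 = t.2 then K s.1 t.1 else 0) +
    (if s.1 = t.1 then (if s.2 = t.2 then (if s.2 then -1 else 1) else u s.1) else 0)

/-- The exchange of the two states of the site `x`; it is the derivative of `rotHam K u` in the
direction `u x`. -/
def siteFlip (x : ι) : Matrix (ι × Bool) (ι × Bool) ℝ := fun s t =>
  if s.1 = x ∧ t.1 = x ∧ s.2 ≠ t.2 then 1 else 0

/-- The complex matrix `rotHam K u - z`, whose inverse is the Green function. -/
noncomputable def shiftedHam (K : Matrix ι ι ℝ) (z : ℂ) (u : ι → ℝ) :
    Matrix (ι × Bool) (ι × Bool) ℂ :=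
  (rotHam K u).map Complex.ofReal - z • 1

variable {K : Matrix ι ι ℝ} {z : ℂ} {u : ι → ℝ}

lemma rotHam_isSymm (hK : K.IsSymm) (u : ι → ℝ) : (rotHam K u).IsSymm := by
  ext ⟨x, a⟩ ⟨y, b⟩
  have := hK.apply x y
  by_cases h : x = y <;> by_cases h' : a = b <;> simp [rotHam, h, h', this, eq_comm]

lemma rotHam_map_isHermitian (hK : K.IsSymm) (u : ι → ℝ) :
    ((rotHam K u).map Complex.ofReal).IsHermitian := by
  ext i j
  simp [(rotHam_isSymm hK u).apply i j]

lemma shiftedHam_isSymm (hK : K.IsSymm) (z : ℂ) (u : ι → ℝ) : (shiftedHam K z u).IsSymm := by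
  ext i j
  simp [shiftedHam, one_apply, (rotHam_isSymm hK u).apply i j, eq_comm]

lemma rotHam_update (K : Matrix ι ι ℝ) (u : ι → ℝ) (x : ι) (τ : ℝ) :
    rotHam K (Function.update u x τ) = rotHam K u + (τ - u x) • siteFlip x := by
  ext ⟨y, a⟩ ⟨z, b⟩
  simp only [rotHam, siteFlip, Matrix.add_apply, Matrix.smul_apply, smul_eq_mul,
    Function.update_apply]
  by_cases hyz : y = z
  · subst hyz
    by_cases hyx : y = x <;> cases a <;> cases b <;> simp [hyx]
  · grind

lemma shiftedHam_update (K : Matrix ι ι ℝ) (z : ℂ) (u : ι → ℝ) (x : ι) (τ : ℝ) :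
    shiftedHam K z (Function.update u x τ) =
      shiftedHam K z u + ((τ : ℂ) - u x) • (siteFlip x).map Complex.ofReal := by
  ext i j
  simp [shiftedHam, rotHam_update]
  ring

lemma siteFlip_map_eq_single (x : ι) : (siteFlip x).map Complex.ofReal =
    single (x, false) (x, true) (1 : ℂ) + single (x, true) (x, false) (1 : ℂ) := by
  ext ⟨y, a⟩ ⟨z, b⟩
  cases a <;> cases b <;> simp [siteFlip, single_apply, eq_comm, apply_ite]

/-- The exchange of the two states of every site, as a permutation of the basis. -/
def flip (ι : Type*) : ι × Bool ≃ ι × Bool := (Equiv.refl ι).prodCongr Equiv.boolNot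

lemma shiftedHam_submatrix_flip (K : Matrix ι ι ℝ) (z : ℂ) (u : ι → ℝ) :
    (shiftedHam K z u).submatrix (flip ι) (flip ι) =
      shiftedHam K z u - diagonal fun s => if s.2 then -2 else 2 := by
  ext ⟨x, a⟩ ⟨y, b⟩
  by_cases hxy : x = y <;> cases a <;> cases b <;>
    simp [shiftedHam, rotHam, flip, hxy, one_apply] <;> ring

end RotatedHamiltonian

section GreenFunction

variable {ι : Type*} [Fintype ι] [DecidableEq ι] {K : Matrix ι ι ℝ} {z : ℂ} {u : ι → ℝ}
  {G : Matrix (ι × Bool) (ι × Bool) ℂ}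

lemma isUnit_shiftedHam (hK : K.IsSymm) (hz : z.im ≠ 0) (u : ι → ℝ) :
    IsUnit (shiftedHam K z u) :=
  isUnit_sub_smul_one (rotHam_map_isHermitian hK u) hz

lemma isSymm_of_shiftedHam_mul_eq_one (hK : K.IsSymm) (hG : shiftedHam K z u * G = 1) :
    G.IsSymm := by
  rw [← inv_eq_right_inv hG, IsSymm, transpose_nonsing_inv, shiftedHam_isSymm hK z u]

-- Conjugation by `flip` adds a multiple of the diagonal Pauli matrix to the Hamiltonian, so this is
-- the resolvent identity between `G` and its conjugate.
lemma green_flip_diag_sub_diag (hG : shiftedHam K z u * G = 1) (x : ι) (a : Bool) :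
    G (x, !a) (x, !a) - G (x, a) (x, a) =
      2 * ∑ y, (G (x, !a) (y, true) * G (y, false) (x, a) -
        G (x, !a) (y, false) * G (y, true) (x, a)) := by
  set D : Matrix (ι × Bool) (ι × Bool) ℂ := diagonal fun s => if s.2 then -2 else 2
  set G' := G.submatrix (flip ι) (flip ι)
  have hG' : G' * (shiftedHam K z u - D) = 1 := by
    rw [← shiftedHam_submatrix_flip, submatrix_mul_equiv, mul_eq_one_comm.mp hG,
      submatrix_one_equiv]
  have hres : G' - G = G' * D * G := by
    calc G' - G = G' * (shiftedHam K z u * G) - G' * (shiftedHam K z u - D) * G := by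
          rw [hG, hG', mul_one, one_mul]
      _ = G' * D * G := by rw [mul_sub, sub_mul, mul_assoc, sub_sub_cancel]
  have h := congrFun₂ hres (x, a) (x, a)
  rw [mul_apply, Fintype.sum_prod_type] at h
  simp only [D, mul_diagonal, Fintype.sum_bool] at h
  simp only [G', Matrix.sub_apply, submatrix_apply, flip, Equiv.prodCongr_apply, Prod.map_apply,
    Equiv.refl_apply, Equiv.boolNot_apply] at h
  rw [h, Finset.mul_sum]
  refine Finset.sum_congr rfl fun y _ => ?_
  simp
  ring

/-- The permanent of the `2 × 2` block of `G` between the sites `x` and `y`. -/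
def blockPerm (G : Matrix (ι × Bool) (ι × Bool) ℂ) (x y : ι) : ℂ :=
  G (x, false) (y, false) * G (x, true) (y, true) +
    G (x, false) (y, true) * G (x, true) (y, false)

omit [Fintype ι] [DecidableEq ι] in
lemma norm_block_minor_le (hsymm : G.IsSymm) (x y : ι) (a b : Bool) :
    ‖G (x, !a) (y, true) * G (y, false) (x, a) - G (x, !a) (y, false) * G (y, true) (x, a)‖ ≤
      ‖blockPerm G x y‖ + 2 * (‖G (x, a) (y, b)‖ * ‖G (x, !a) (y, !b)‖) := by
  have hsigned : G (x, !a) (y, true) * G (y, false) (x, a) -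
      G (x, !a) (y, false) * G (y, true) (x, a) =
        (if b then 1 else -1) * (blockPerm G x y - 2 * (G (x, a) (y, b) * G (x, !a) (y, !b))) := by
    rw [hsymm.apply (x, a), hsymm.apply (x, a), blockPerm]
    cases a <;> cases b <;> simp only [Bool.not_true, Bool.not_false, if_true, Bool.false_eq_true,
      if_false] <;> ring
  have hsign : ‖(if b then 1 else -1 : ℂ)‖ = 1 := by cases b <;> simp
  rw [hsigned, norm_mul, hsign, one_mul]
  refine (norm_sub_le _ _).trans_eq ?_
  simp

/-- Bounds on the Green function `G` at scale `Z` that hold at typical potentials. -/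
structure IsTempered (G : Matrix (ι × Bool) (ι × Bool) ℂ) (Z : ℝ) : Prop where
  diag_mul_le : ∀ y, ‖G (y, false) (y, false)‖ * ‖G (y, true) (y, true)‖ ≤ Z ^ 2
  perm_le : ∀ x y, ‖blockPerm G x y‖ ≤ Z ^ 2

omit [Fintype ι] [DecidableEq ι] in
lemma IsTempered.diag_mul_not_le {Z : ℝ} (h : IsTempered G Z) (y : ι) (a : Bool) :
    ‖G (y, a) (y, a)‖ * ‖G (y, !a) (y, !a)‖ ≤ Z ^ 2 := by
  cases a
  · exact h.diag_mul_le y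
  · rw [mul_comm]
    exact h.diag_mul_le y

omit [Fintype ι] [DecidableEq ι] in
lemma IsTempered.exists_diag_le {Z : ℝ} (hZ : 0 ≤ Z) (h : IsTempered G Z) (y : ι) :
    ∃ b, ‖G (y, b) (y, b)‖ ≤ Z := by
  by_contra! hlt
  nlinarith [h.diag_mul_le y, hlt false, hlt true]

omit [Fintype ι] [DecidableEq ι] in
lemma IsTempered.norm_partner_diag_le {Z c : ℝ} (h : IsTempered G Z) {x : ι} {a : Bool}
    (hlarge : 1 ≤ c * ‖G (x, a) (x, a)‖) (hc : 0 ≤ c) : ‖G (x, !a) (x, !a)‖ ≤ c * Z ^ 2 :=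
  calc ‖G (x, !a) (x, !a)‖ ≤ c * ‖G (x, a) (x, a)‖ * ‖G (x, !a) (x, !a)‖ :=
        le_mul_of_one_le_left (norm_nonneg _) hlarge
    _ = c * (‖G (x, a) (x, a)‖ * ‖G (x, !a) (x, !a)‖) := by ring
    _ ≤ c * Z ^ 2 := by gcongr; exact h.diag_mul_not_le x a

lemma mul_norm_sq_le_norm_diag (hK : K.IsSymm) (hG : shiftedHam K z u * G = 1) {w : ℝ}
    (hzw : z.im = w ^ 2) (s t : ι × Bool) : w ^ 2 * ‖G s t‖ ^ 2 ≤ ‖G t t‖ := by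
  rw [← hzw]
  exact im_mul_norm_sq_le_norm_diag (rotHam_map_isHermitian hK u) (by rw [hzw]; positivity) hG s t

lemma IsTempered.mul_norm_block_minor_le (hK : K.IsSymm) (hG : shiftedHam K z u * G = 1)
    {Z w V : ℝ} (hZ : 1 ≤ Z) (hzw : z.im = w ^ 2) (hw : 0 < w) (hw1 : w ≤ 1) (hV : 1 ≤ V)
    (h : IsTempered G Z) {x : ι} {a : Bool} (hlarge : 1 ≤ 4 * V * w ^ 2 * ‖G (x, a) (x, a)‖)
    (y : ι) :
    w * ‖G (x, !a) (y, true) * G (y, false) (x, a) - G (x, !a) (y, false) * G (y, true) (x, a)‖ ≤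
      5 * V * Z ^ 2 := by
  have hsymm := isSymm_of_shiftedHam_mul_eq_one hK hG
  have hrow : ∀ t, ‖G (x, !a) t‖ ≤ 2 * V * Z := fun t => by
    have h1 : w ^ 2 * ‖G (x, !a) t‖ ^ 2 ≤ w ^ 2 * (4 * V * Z ^ 2) := by
      rw [← hsymm.apply]
      linarith [mul_norm_sq_le_norm_diag hK hG hzw t (x, !a),
        h.norm_partner_diag_le hlarge (by positivity)]
    refine abs_le_of_sq_le_sq' ?_ (by positivity) |>.2
    nlinarith [le_of_mul_le_mul_left h1 (by positivity), sq_nonneg Z]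
  obtain ⟨b, hb⟩ := h.exists_diag_le (by positivity) y
  have hcol : w * ‖G (x, a) (y, b)‖ ≤ Z := by
    refine abs_le_of_sq_le_sq' ?_ (by positivity) |>.2
    nlinarith [mul_norm_sq_le_norm_diag hK hG hzw (x, a) (y, b)]
  calc w * ‖G (x, !a) (y, true) * G (y, false) (x, a) -
          G (x, !a) (y, false) * G (y, true) (x, a)‖
      ≤ w * (Z ^ 2 + 2 * (‖G (x, a) (y, b)‖ * (2 * V * Z))) := by
        gcongr
        refine (norm_block_minor_le hsymm x y a b).trans ?_
        gcongr
        · exact h.perm_le x y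
        · exact hrow _
    _ = w * Z ^ 2 + 4 * V * Z * (w * ‖G (x, a) (y, b)‖) := by ring
    _ ≤ V * Z ^ 2 + 4 * V * Z * Z := by gcongr; exact hw1.trans hV
    _ = 5 * V * Z ^ 2 := by ring

-- A large diagonal entry `G (x, a) (x, a)` forces the entries of row `(x, !a)` to be moderate,
-- hence all minors between `x` and other sites to be `O(1 / w)`; the flip identity then bounds
-- `G (x, a) (x, a)` itself by `O(1 / w)`.
lemma IsTempered.mul_norm_diag_le (hK : K.IsSymm) (hG : shiftedHam K z u * G = 1) {Z w : ℝ}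
    (hZ : 1 ≤ Z) (hzw : z.im = w ^ 2) (hw : 0 < w) (hw1 : w ≤ 1) (h : IsTempered G Z) {x : ι}
    {a : Bool} (hlarge : 1 ≤ 4 * Fintype.card ι * w ^ 2 * ‖G (x, a) (x, a)‖) :
    w * ‖G (x, a) (x, a)‖ ≤ 14 * (Fintype.card ι) ^ 2 * Z ^ 2 := by
  have hV : (1 : ℝ) ≤ Fintype.card ι := by exact_mod_cast Fintype.card_pos_iff.mpr ⟨x⟩
  set V := (Fintype.card ι : ℝ)
  have hsum : w * ‖G (x, !a) (x, !a) - G (x, a) (x, a)‖ ≤ 2 * (V * (5 * V * Z ^ 2)) := by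
    rw [green_flip_diag_sub_diag hG, norm_mul, Complex.norm_ofNat, mul_left_comm]
    refine mul_le_mul_of_nonneg_left ?_ zero_le_two
    calc w * ‖∑ y, (G (x, !a) (y, true) * G (y, false) (x, a) -
            G (x, !a) (y, false) * G (y, true) (x, a))‖
        ≤ ∑ y, w * ‖G (x, !a) (y, true) * G (y, false) (x, a) -
            G (x, !a) (y, false) * G (y, true) (x, a)‖ := by
          rw [← Finset.mul_sum]
          gcongr
          exact norm_sum_le _ _
      _ ≤ ∑ _y : ι, 5 * V * Z ^ 2 := Finset.sum_le_sum fun y _ =>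
          h.mul_norm_block_minor_le hK hG hZ hzw hw hw1 hV hlarge y
      _ = V * (5 * V * Z ^ 2) := by simp [V]
  calc w * ‖G (x, a) (x, a)‖
      ≤ w * (‖G (x, !a) (x, !a)‖ + ‖G (x, !a) (x, !a) - G (x, a) (x, a)‖) := by
        gcongr
        exact norm_le_norm_add_norm_sub _ _
    _ ≤ w * (4 * V * w ^ 2 * Z ^ 2) + 2 * (V * (5 * V * Z ^ 2)) := by
        rw [mul_add]
        gcongr
        exact h.norm_partner_diag_le hlarge (by positivity)
    _ = 4 * V * Z ^ 2 * w ^ 3 + 10 * V ^ 2 * Z ^ 2 := by ring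
    _ ≤ 4 * V * Z ^ 2 * V + 10 * V ^ 2 * Z ^ 2 := by
        gcongr
        exact (pow_le_one₀ hw.le hw1).trans hV
    _ = 14 * V ^ 2 * Z ^ 2 := by ring

lemma IsTempered.one_le_of_almost_eigenvector (hK : K.IsSymm) (hG : shiftedHam K z u * G = 1)
    {Z w : ℝ} (hZ : 1 ≤ Z) (hzw : z.im = w ^ 2) (hw : 0 < w) (hw1 : w ≤ 1) (h : IsTempered G Z)
    {v : ι × Bool → ℂ} (hv : v ≠ 0)
    (hv' : ∑ i, ‖(shiftedHam K z u *ᵥ v) i‖ ^ 2 ≤ 2 * z.im ^ 2 * ∑ i, ‖v i‖ ^ 2) :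
    1 ≤ 56 * Fintype.card ι ^ 3 * Z ^ 2 * w := by
  obtain ⟨⟨x, a⟩, hxa⟩ := exists_im_le_mul_norm_resolvent_diag (rotHam_map_isHermitian hK u)
    (by rw [hzw]; positivity) hG hv hv'
  have hlarge : 1 ≤ 4 * Fintype.card ι * w ^ 2 * ‖G (x, a) (x, a)‖ := by
    rw [Fintype.card_prod, Fintype.card_bool, hzw] at hxa
    push_cast at hxa
    refine le_of_mul_le_mul_left ?_ (by positivity : 0 < w ^ 2)
    linarith
  calc 1 ≤ 4 * Fintype.card ι * w * (w * ‖G (x, a) (x, a)‖) := by linarith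
    _ ≤ 4 * Fintype.card ι * w * (14 * Fintype.card ι ^ 2 * Z ^ 2) :=
        mul_le_mul_of_nonneg_left (h.mul_norm_diag_le hK hG hZ hzw hw hw1 hlarge) (by positivity)
    _ = 56 * Fintype.card ι ^ 3 * Z ^ 2 * w := by ring

end GreenFunction

section DeterminantRatio

lemma det_add_sum_smul_single {n m R : Type*} [Fintype n] [DecidableEq n] [Fintype m]
    [DecidableEq m] [CommRing R] {M G : Matrix n n R} (hMG : M * G = 1) (c r : m → n) (t : m → R) :
    (M + ∑ q, t q • single (c q) (r q) (1 : R)).det =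
      M.det * (1 + of fun p q => G (r p) (c q) * t q).det := by
  set B : Matrix n m R := of fun i q => if c q = i then t q else 0
  set C : Matrix m n R := of fun p j => if r p = j then 1 else 0
  have hsum : ∑ q, t q • single (c q) (r q) (1 : R) = B * C := by
    ext i j
    simp only [B, C, Matrix.sum_apply, mul_apply, Matrix.smul_apply, single_apply, of_apply]
    refine Finset.sum_congr rfl fun q _ => ?_
    by_cases hc : c q = i <;> by_cases hr : r q = j <;> simp [hc, hr]
  have hfactor : M + B * C = M * (1 + G * B * C) := by
    rw [Matrix.mul_add, Matrix.mul_one, Matrix.mul_assoc G, ← Matrix.mul_assoc M, hMG,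
      Matrix.one_mul]
  have hCGB : C * (G * B) = of fun p q => G (r p) (c q) * t q := by
    ext p q
    simp [mul_apply, B, C]
  rw [hsum, hfactor, det_mul, det_one_add_mul_comm, hCGB]

variable {ι : Type*} [Fintype ι] [DecidableEq ι] {M G : Matrix (ι × Bool) (ι × Bool) ℂ}

lemma det_add_smul_siteFlip (hMG : M * G = 1) (hG : G.IsSymm) (x : ι) (t : ℂ) :
    (M + t • (siteFlip x).map Complex.ofReal).det =
      M.det * (1 + 2 * G (x, false) (x, true) * t + (G (x, false) (x, true) ^ 2 -
        G (x, false) (x, false) * G (x, true) (x, true)) * t ^ 2) := by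
  have h := det_add_sum_smul_single hMG ![(x, false), (x, true)] ![(x, true), (x, false)] ![t, t]
  simp only [Fin.sum_univ_two, cons_val_zero, cons_val_one] at h
  rw [siteFlip_map_eq_single, smul_add, h, det_fin_two]
  congr 1
  simp only [Matrix.add_apply, one_apply_eq, of_apply, cons_val_zero, cons_val_one, ne_eq,
    zero_ne_one, one_ne_zero, not_false_eq_true, one_apply_ne, hG.apply (x, false) (x, true)]
  ring

lemma det_fin_four {R : Type*} [CommRing R] (A : Matrix (Fin 4) (Fin 4) R) :
    A.det =
      (A 0 0 * A 1 1 - A 1 0 * A 0 1) * (A 2 2 * A 3 3 - A 3 2 * A 2 3) -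
      (A 0 0 * A 2 1 - A 2 0 * A 0 1) * (A 1 2 * A 3 3 - A 3 2 * A 1 3) +
      (A 0 0 * A 3 1 - A 3 0 * A 0 1) * (A 1 2 * A 2 3 - A 2 2 * A 1 3) +
      (A 1 0 * A 2 1 - A 2 0 * A 1 1) * (A 0 2 * A 3 3 - A 3 2 * A 0 3) -
      (A 1 0 * A 3 1 - A 3 0 * A 1 1) * (A 0 2 * A 2 3 - A 2 2 * A 0 3) +
      (A 2 0 * A 3 1 - A 3 0 * A 2 1) * (A 0 2 * A 1 3 - A 1 2 * A 0 3) := by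
  rw [det_succ_row_zero]
  simp only [Fin.sum_univ_four, det_fin_three, submatrix_apply, Fin.succAbove, Fin.succ]
  simp
  ring

lemma exists_det_one_add_mul_diagonal (A : Matrix (Fin 4) (Fin 4) ℂ) :
    ∃ (p r : ℂ → ℂ) (q₀ q₂ : ℂ), ∀ t s : ℂ,
      (1 + of fun i j => A i j * ![t, t, s, s] j).det =
        p s + (q₀ + (A 0 0 * A 2 2 - A 0 2 * A 2 0 + (A 0 0 * A 3 3 - A 0 3 * A 3 0) +
          (A 1 1 * A 2 2 - A 1 2 * A 2 1) + (A 1 1 * A 3 3 - A 1 3 * A 3 1)) * s + q₂ * s ^ 2) * t +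
          r s * t ^ 2 := by
  set D : ℂ → ℂ → ℂ := fun t s => (1 + of fun i j => A i j * ![t, t, s, s] j).det with hD
  set q : ℂ → ℂ := fun s => (D 1 s - D (-1) s) / 2 with hq
  refine ⟨D 0, fun s => (D 1 s + D (-1) s) / 2 - D 0 s, q 0, (q 1 + q (-1)) / 2 - q 0,
    fun t s => ?_⟩
  change D t s = _
  simp only [hq, hD, det_fin_four, Matrix.add_apply, of_apply, one_apply_eq, cons_val_zero,
    cons_val_one, cons_val]
  simp only [one_apply, Fin.reduceEq, if_false]
  ring

lemma exists_det_add_smul_siteFlip_add_smul_siteFlip (hMG : M * G = 1) (hG : G.IsSymm) (x y : ι) :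
    ∃ (p r : ℂ → ℂ) (q₀ q₂ : ℂ), ∀ t s : ℂ,
      (M + t • (siteFlip x).map Complex.ofReal + s • (siteFlip y).map Complex.ofReal).det =
        M.det * (p s + (q₀ + 2 * (2 * (G (x, false) (x, true) * G (y, false) (y, true)) -
          blockPerm G x y) * s + q₂ * s ^ 2) * t + r s * t ^ 2) := by
  set c : Fin 4 → ι × Bool := ![(x, false), (x, true), (y, false), (y, true)]
  set r : Fin 4 → ι × Bool := ![(x, true), (x, false), (y, true), (y, false)]
  obtain ⟨p, r', q₀, q₂, h⟩ := exists_det_one_add_mul_diagonal (G.submatrix r c)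
  refine ⟨p, r', q₀, q₂, fun t s => ?_⟩
  have hflips : t • (siteFlip x).map Complex.ofReal + s • (siteFlip y).map Complex.ofReal =
      ∑ q, ![t, t, s, s] q • single (c q) (r q) (1 : ℂ) := by
    simp only [siteFlip_map_eq_single, c, r, Fin.sum_univ_four, cons_val_zero, cons_val_one,
      cons_val]
    module
  rw [add_assoc, hflips, det_add_sum_smul_single hMG]
  refine congrArg (M.det * ·) ((h t s).trans ?_)
  simp only [submatrix_apply, c, r, cons_val_zero, cons_val_one, cons_val, blockPerm,
    hG.apply (x, false) (x, true), hG.apply (y, false) (y, true), hG.apply (x, false) (y, _),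
    hG.apply (x, true) (y, _)]
  ring

end DeterminantRatio

section Slicing

variable {ι : Type*} [Fintype ι] [DecidableEq ι] {X : ι → Type*} [∀ i, MeasurableSpace (X i)]
  (μ : ∀ i, Measure (X i)) [∀ i, IsProbabilityMeasure (μ i)]

lemma lintegral_lintegral_update (x : ι) {f : (∀ i, X i) → ENNReal} (hf : Measurable f) :
    ∫⁻ u, ∫⁻ τ, f (Function.update u x τ) ∂μ x ∂Measure.pi μ = ∫⁻ u, f u ∂Measure.pi μ := by
  refine lintegral_eq_of_lmarginal_eq {x} ?_ hf ?_
  · rw [← lmarginal_singleton]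
    exact hf.lmarginal μ
  · rw [lmarginal_singleton, lmarginal_singleton]
    ext u
    simp

omit [Fintype ι] in
lemma measurable_measure_update_mem (x : ι) {S : Set (∀ i, X i)} (hS : MeasurableSet S) :
    Measurable fun u => μ x {τ | Function.update u x τ ∈ S} := by
  have h : Measurable (∫⋯∫⁻_{x}, S.indicator 1 ∂μ) := (measurable_one.indicator hS).lmarginal μ
  rw [lmarginal_singleton] at h
  convert h using 2 with u
  exact (lintegral_indicator_one (measurable_update u hS)).symm

lemma pi_eq_lintegral_measure_update_mem (x : ι) {S : Set (∀ i, X i)} (hS : MeasurableSet S) :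
    Measure.pi μ S = ∫⁻ u, μ x {τ | Function.update u x τ ∈ S} ∂Measure.pi μ := by
  rw [← lintegral_indicator_one hS, ← lintegral_lintegral_update μ x (measurable_one.indicator hS)]
  refine lintegral_congr fun u => ?_
  exact lintegral_indicator_one (measurable_update u hS)

lemma pi_inter_le_mul_of_update_mem (x : ι) {A B T : Set (∀ i, X i)} (hT : MeasurableSet T)
    {c : ENNReal} (hAB : ∀ u ∈ A, ∀ τ, Function.update u x τ ∈ B)
    (hc : ∀ u, μ x {τ | Function.update u x τ ∈ T} ≤ c) :
    Measure.pi μ (A ∩ T) ≤ c * Measure.pi μ B := by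
  set Q := toMeasurable (Measure.pi μ) B with hQ
  have hQm : MeasurableSet Q := measurableSet_toMeasurable _ _
  set f : (∀ i, X i) → ENNReal := fun u => μ x {τ | Function.update u x τ ∈ Q} with hf
  have hfm : Measurable f := measurable_measure_update_mem μ x hQm
  have hA : A ∩ T ⊆ {u | 1 ≤ T.indicator f u} := by
    rintro u ⟨huA, huT⟩
    have huniv : {τ | Function.update u x τ ∈ Q} = Set.univ :=
      Set.eq_univ_of_forall fun τ => subset_toMeasurable _ _ (hAB u huA τ)
    simp [Set.indicator_of_mem huT, hf, huniv]
  calc Measure.pi μ (A ∩ T)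
      ≤ ∫⁻ u, T.indicator f u ∂Measure.pi μ := by
        simpa using (mul_le_mul_right (measure_mono hA) 1).trans
          (mul_meas_ge_le_lintegral (hfm.indicator hT) 1)
    _ = ∫⁻ u, ∫⁻ τ, T.indicator f (Function.update u x τ) ∂μ x ∂Measure.pi μ :=
        (lintegral_lintegral_update μ x (hfm.indicator hT)).symm
    _ = ∫⁻ u, f u * μ x {τ | Function.update u x τ ∈ T} ∂Measure.pi μ := by
        refine lintegral_congr fun u => ?_
        have hfu : ∀ τ, f (Function.update u x τ) = f u := by simp [hf]
        refine Eq.trans ?_ (lintegral_indicator_const (measurable_update u hT) (f u))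
        simp only [Set.indicator, hfu]
        rfl
    _ ≤ ∫⁻ u, f u * c ∂Measure.pi μ := by gcongr with u; exact hc u
    _ = c * Measure.pi μ B := by
        rw [lintegral_mul_const _ hfm, ← pi_eq_lintegral_measure_update_mem μ x hQm, hQ,
          measure_toMeasurable, mul_comm]

end Slicing

section UniformMeasure

lemma unif_apply (S : Set ℝ) : unif S = 2⁻¹ * volume (S ∩ Set.Icc (-1) 1) := by
  rw [unif, Measure.smul_apply, Measure.restrict_apply' measurableSet_Icc, ENNReal.smul_def]
  simp

lemma unif_le_ofReal_div_two {S : Set ℝ} {c : ℝ}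
    (h : volume (S ∩ Set.Icc (-1) 1) ≤ ENNReal.ofReal c) : unif S ≤ ENNReal.ofReal (c / 2) := by
  rw [unif_apply, ENNReal.ofReal_div_of_pos two_pos, ENNReal.div_eq_inv_mul]
  simpa using mul_le_mul_right h 2⁻¹

lemma ae_abs_le_one (ι : Type*) [Fintype ι] : ∀ᵐ u ∂unifPi ι, ∀ x, |u x| ≤ 1 := by
  have hunif : ∀ᵐ τ ∂unif, |τ| ≤ 1 := by
    rw [ae_iff, unif_apply]
    have hempty : {τ : ℝ | ¬|τ| ≤ 1} ∩ Set.Icc (-1) 1 = ∅ := by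
      ext τ
      simp [abs_le]
    rw [hempty, measure_empty, mul_zero]
  exact ae_all_iff.2 fun x => (Measure.quasiMeasurePreserving_eval (fun _ => unif) x).ae hunif

end UniformMeasure

section QuadraticPolynomials

lemma volume_le_of_no_separated_triple {S : Set ℝ} {θ : ℝ} (hθ : 0 ≤ θ)
    (h : ∀ a ∈ S, ∀ b ∈ S, ∀ c ∈ S, θ ≤ |a - b| → θ ≤ |a - c| → ¬θ ≤ |b - c|) :
    volume S ≤ ENNReal.ofReal (4 * θ) := by
  have hvol : ∀ p, volume (Metric.closedBall p θ) = ENNReal.ofReal (2 * θ) :=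
    fun p => Real.volume_closedBall p θ
  have hnear : ∀ {p c}, ¬θ ≤ |p - c| → c ∈ Metric.closedBall p θ := fun {p c} hc => by
    rw [Metric.mem_closedBall', Real.dist_eq]
    exact (not_le.1 hc).le
  obtain rfl | ⟨p, hp⟩ := S.eq_empty_or_nonempty
  · simp
  by_cases hfar : ∃ q ∈ S, θ ≤ |p - q|
  · obtain ⟨q, hq, hpq⟩ := hfar
    have hcover : S ⊆ Metric.closedBall p θ ∪ Metric.closedBall q θ := fun c hc => by
      by_cases hpc : θ ≤ |p - c|
      · exact Or.inr (hnear (h p hp q hq c hc hpq hpc))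
      · exact Or.inl (hnear hpc)
    refine (measure_mono hcover).trans ((measure_union_le _ _).trans_eq ?_)
    rw [hvol, hvol, ← ENNReal.ofReal_add (by positivity) (by positivity)]
    ring_nf
  · have hcover : S ⊆ Metric.closedBall p θ := fun c hc =>
      hnear fun hpc => hfar ⟨c, hc, hpc⟩
    refine (measure_mono hcover).trans ((hvol p).le.trans (ENNReal.ofReal_le_ofReal ?_))
    linarith

lemma lagrange_quadratic {F : Type*} [Field F] (q₀ q₁ q₂ m : F) {a b c : F} (hab : a - b ≠ 0)
    (hac : a - c ≠ 0) (hbc : b - c ≠ 0) :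
    q₀ + q₁ * m + q₂ * m ^ 2 =
      (m - b) * (m - c) / ((a - b) * (a - c)) * (q₀ + q₁ * a + q₂ * a ^ 2) -
      (m - a) * (m - c) / ((a - b) * (b - c)) * (q₀ + q₁ * b + q₂ * b ^ 2) +
      (m - a) * (m - b) / ((a - c) * (b - c)) * (q₀ + q₁ * c + q₂ * c ^ 2) := by
  field_simp
  ring

lemma norm_quadratic_le {q₀ q₁ q₂ : ℂ} {m a b c θ B : ℝ} (hm : |m| ≤ 1) (ha : |a| ≤ 1)
    (hb : |b| ≤ 1) (hc : |c| ≤ 1) (hθ : 0 < θ) (hab : θ ≤ |a - b|) (hac : θ ≤ |a - c|)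
    (hbc : θ ≤ |b - c|) (hBa : ‖q₀ + q₁ * a + q₂ * a ^ 2‖ ≤ B)
    (hBb : ‖q₀ + q₁ * b + q₂ * b ^ 2‖ ≤ B) (hBc : ‖q₀ + q₁ * c + q₂ * c ^ 2‖ ≤ B) :
    ‖q₀ + q₁ * m + q₂ * m ^ 2‖ ≤ 12 / θ ^ 2 * B := by
  have hne : ∀ {s t : ℝ}, θ ≤ |s - t| → (s : ℂ) - t ≠ 0 := fun h => by
    exact_mod_cast abs_pos.1 (hθ.trans_le h)
  have hweight : ∀ {p r s t s' t' : ℝ} {Q : ℂ}, |p| ≤ 1 → |r| ≤ 1 → θ ≤ |s - t| → θ ≤ |s' - t'| →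
      ‖Q‖ ≤ B → ‖((m : ℂ) - p) * (m - r) / ((s - t) * (s' - t')) * Q‖ ≤ 4 / θ ^ 2 * B := by
    intro p r s t s' t' Q hp hr hst hst' hQ
    have hcast : ((m : ℂ) - p) * (m - r) / ((s - t) * (s' - t')) =
        ((m - p) * (m - r) / ((s - t) * (s' - t')) : ℝ) := by push_cast; ring
    rw [norm_mul, hcast, Complex.norm_real, Real.norm_eq_abs, abs_div, abs_mul, abs_mul]
    have hmp : |m - p| ≤ 2 := (abs_sub _ _).trans (by linarith)
    have hmr : |m - r| ≤ 2 := (abs_sub _ _).trans (by linarith)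
    calc |m - p| * |m - r| / (|s - t| * |s' - t'|) * ‖Q‖ ≤ 2 * 2 / (θ * θ) * B := by gcongr
      _ = 4 / θ ^ 2 * B := by ring
  rw [lagrange_quadratic q₀ q₁ q₂ (m : ℂ) (hne hab) (hne hac) (hne hbc)]
  refine (norm_add_le _ _).trans ((add_le_add_left (norm_sub_le _ _) _).trans ?_)
  have ka := hweight hb hc hab hac hBa
  have kb := hweight ha hc hab hbc hBb
  have kc := hweight ha hb hac hbc hBc
  calc _ ≤ 4 / θ ^ 2 * B + 4 / θ ^ 2 * B + 4 / θ ^ 2 * B := by gcongr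
    _ = 12 / θ ^ 2 * B := by ring

/-- The values of a coupling at which determinants are compared; a quadratic polynomial is
controlled on `[-1, 1]` by its values at these three points. -/
noncomputable def probes : Finset ℝ := {0, 1, -1}

lemma abs_le_one_of_mem_probes {ν : ℝ} (hν : ν ∈ probes) : |ν| ≤ 1 := by
  simp only [probes, Finset.mem_insert, Finset.mem_singleton] at hν
  rcases hν with rfl | rfl | rfl <;> simp

lemma norm_coeff_le_of_probes {q₀ q₁ q₂ : ℂ} {s B : ℝ} (hs : |s| ≤ 1)
    (h : ∀ ν ∈ probes, ‖q₀ + q₁ * (ν - s) + q₂ * (ν - s) ^ 2‖ ≤ B) :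
    ‖q₁‖ ≤ 5 * B ∧ ‖q₂‖ ≤ 2 * B := by
  set q : ℝ → ℂ := fun ν => q₀ + q₁ * (ν - s) + q₂ * (ν - s) ^ 2 with hq
  have h0 : ‖q 0‖ ≤ B := h 0 (by simp [probes])
  have h1 : ‖q 1‖ ≤ B := h 1 (by simp [probes])
  have h2 : ‖q (-1)‖ ≤ B := h (-1) (by simp [probes])
  have hq₂ : q₂ = (q 1 + q (-1)) / 2 - q 0 := by simp only [hq]; push_cast; ring
  have hq₁ : q₁ = (q 1 - q (-1)) / 2 + 2 * q₂ * s := by simp only [hq]; push_cast; ring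
  have hB₂ : ‖q₂‖ ≤ 2 * B := by
    rw [hq₂]
    refine (norm_sub_le _ _).trans ?_
    rw [norm_div, Complex.norm_ofNat]
    linarith [norm_add_le (q 1) (q (-1))]
  refine ⟨?_, hB₂⟩
  rw [hq₁]
  refine (norm_add_le _ _).trans ?_
  rw [norm_div, norm_mul, norm_mul, Complex.norm_ofNat, Complex.norm_real, Real.norm_eq_abs]
  have hs' : 2 * ‖q₂‖ * |s| ≤ 2 * ‖q₂‖ * 1 := by gcongr
  linarith [norm_sub_le (q 1) (q (-1))]

lemma unif_quadratic_lt_probes_le (q₀ q₁ q₂ : ℂ) {κ θ : ℝ} (hκ : 0 ≤ κ) (hθ : 0 < θ)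
    (hκθ : 12 * κ ≤ θ ^ 2) :
    unif {τ : ℝ | ∃ ν ∈ probes, ‖q₀ + q₁ * τ + q₂ * τ ^ 2‖ < κ * ‖q₀ + q₁ * ν + q₂ * ν ^ 2‖} ≤
      ENNReal.ofReal (2 * θ) := by
  set q : ℝ → ℂ := fun τ => q₀ + q₁ * τ + q₂ * τ ^ 2
  obtain ⟨m, hm, hmax⟩ : ∃ m ∈ probes, ∀ ν ∈ probes, ‖q ν‖ ≤ ‖q m‖ :=
    Finset.exists_max_image _ _ ⟨0, by simp [probes]⟩
  have hvol : volume ({τ | ∃ ν ∈ probes, ‖q τ‖ < κ * ‖q ν‖} ∩ Set.Icc (-1) 1) ≤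
      ENNReal.ofReal (4 * θ) := by
    refine volume_le_of_no_separated_triple hθ.le ?_
    rintro a ⟨⟨ν, hν, hνa⟩, ha⟩ b ⟨⟨ν', hν', hνb⟩, hb⟩ c ⟨⟨ν'', hν'', hνc⟩, hc⟩ hab hac hbc
    have hsmall : ∀ {t ν}, ν ∈ probes → ‖q t‖ < κ * ‖q ν‖ → ‖q t‖ < κ * ‖q m‖ :=
      fun hν h => h.trans_le (by gcongr; exact hmax _ hν)
    set B := max ‖q a‖ (max ‖q b‖ ‖q c‖)
    have hBlt : B < κ * ‖q m‖ :=
      max_lt (hsmall hν hνa) (max_lt (hsmall hν' hνb) (hsmall hν'' hνc))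
    have hqm : ‖q m‖ ≤ 12 / θ ^ 2 * B :=
      norm_quadratic_le (abs_le_one_of_mem_probes hm) (abs_le.2 ha) (abs_le.2 hb) (abs_le.2 hc) hθ
        hab hac hbc (le_max_left _ _) ((le_max_left _ _).trans (le_max_right _ _))
        ((le_max_right _ _).trans (le_max_right _ _))
    have : ‖q m‖ < ‖q m‖ := calc
      ‖q m‖ ≤ 12 / θ ^ 2 * B := hqm
      _ < 12 / θ ^ 2 * (κ * ‖q m‖) := by gcongr
      _ = 12 * κ / θ ^ 2 * ‖q m‖ := by ring
      _ ≤ 1 * ‖q m‖ := by gcongr; exact div_le_one_of_le₀ hκθ (by positivity)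
      _ = ‖q m‖ := one_mul _
    exact this.false
  convert unif_le_ofReal_div_two hvol using 2
  ring

end QuadraticPolynomials

section TypicalPotentials

variable {ι : Type*} [Fintype ι] [DecidableEq ι] {K : Matrix ι ι ℝ} {z : ℂ} {u : ι → ℝ} {κ : ℝ}
  {G : Matrix (ι × Bool) (ι × Bool) ℂ}

/-- The characteristic determinant `det (H(u) - z)`. -/
noncomputable def charDet (K : Matrix ι ι ℝ) (z : ℂ) (u : ι → ℝ) : ℂ := (shiftedHam K z u).det

lemma charDet_ne_zero (hK : K.IsSymm) (hz : z.im ≠ 0) (u : ι → ℝ) : charDet K z u ≠ 0 :=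
  ((isUnit_iff_isUnit_det _).1 (isUnit_shiftedHam hK hz u)).ne_zero

lemma continuous_charDet (K : Matrix ι ι ℝ) (z : ℂ) : Continuous (charDet K z) := by
  refine Continuous.matrix_det (Continuous.sub ?_ continuous_const)
  refine Continuous.matrix_map (continuous_matrix fun s t => ?_) Complex.continuous_ofReal
  unfold rotHam
  split_ifs <;> fun_prop

lemma charDet_update (hK : K.IsSymm) (hG : shiftedHam K z u * G = 1) (x : ι) (ν : ℝ) :
    charDet K z (Function.update u x ν) =
      charDet K z u * (1 + 2 * G (x, false) (x, true) * (ν - u x) +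
        (G (x, false) (x, true) ^ 2 - G (x, false) (x, false) * G (x, true) (x, true)) *
          (ν - u x) ^ 2) := by
  rw [charDet, shiftedHam_update,
    det_add_smul_siteFlip hG (isSymm_of_shiftedHam_mul_eq_one hK hG), charDet]

lemma exists_charDet_update_eq_quadratic (hK : K.IsSymm) (hz : z.im ≠ 0) (u : ι → ℝ) (x : ι) :
    ∃ q₀ q₁ q₂ : ℂ, ∀ τ : ℝ, charDet K z (Function.update u x τ) = q₀ + q₁ * τ + q₂ * τ ^ 2 := by
  obtain ⟨G, hG⟩ := (isUnit_shiftedHam hK hz u).exists_right_inv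
  set d := charDet K z u
  set g := G (x, false) (x, true)
  set m := g ^ 2 - G (x, false) (x, false) * G (x, true) (x, true)
  refine ⟨d * (1 - 2 * g * u x + m * u x ^ 2), d * (2 * g - 2 * m * u x), d * m, fun τ => ?_⟩
  rw [charDet_update hK hG]
  ring

/-- The potentials at which the value `u x` makes the characteristic determinant smaller, by a
factor `κ`, than some probe value would. -/
def atypicalSet (K : Matrix ι ι ℝ) (z : ℂ) (κ : ℝ) (x : ι) : Set (ι → ℝ) :=
  {u | ∃ ν ∈ probes, ‖charDet K z u‖ < κ * ‖charDet K z (Function.update u x ν)‖}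

lemma isOpen_atypicalSet (K : Matrix ι ι ℝ) (z : ℂ) (κ : ℝ) (x : ι) :
    IsOpen (atypicalSet K z κ x) := by
  have hunion : atypicalSet K z κ x =
      ⋃ ν ∈ probes, {u | ‖charDet K z u‖ < κ * ‖charDet K z (Function.update u x ν)‖} := by
    ext u
    simp [atypicalSet]
  rw [hunion]
  refine isOpen_biUnion fun ν _ => isOpen_lt (continuous_charDet K z).norm ?_
  exact continuous_const.mul
    ((continuous_charDet K z).comp (continuous_id.update x continuous_const)).norm

lemma unif_update_mem_atypicalSet_le (hK : K.IsSymm) (hz : z.im ≠ 0) {θ : ℝ} (hκ : 0 ≤ κ)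
    (hθ : 0 < θ) (hκθ : 12 * κ ≤ θ ^ 2) (x : ι) (u : ι → ℝ) :
    unif {τ | Function.update u x τ ∈ atypicalSet K z κ x} ≤ ENNReal.ofReal (2 * θ) := by
  obtain ⟨q₀, q₁, q₂, h⟩ := exists_charDet_update_eq_quadratic hK hz u x
  convert unif_quadratic_lt_probes_le q₀ q₁ q₂ hκ hθ hκθ using 3 with τ
  simp only [atypicalSet, Set.mem_ofPred_eq, Function.update_idem, h]

/-- The potentials that are atypical at `x`, possibly after setting one other site to a probe
value. -/
def resonantSet (K : Matrix ι ι ℝ) (z : ℂ) (κ : ℝ) (x : ι) : Set (ι → ℝ) :=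
  atypicalSet K z κ x ∪
    ⋃ p ∈ Finset.univ.erase x ×ˢ probes, {u | Function.update u p.1 p.2 ∈ atypicalSet K z κ x}

lemma isOpen_resonantSet (K : Matrix ι ι ℝ) (z : ℂ) (κ : ℝ) (x : ι) :
    IsOpen (resonantSet K z κ x) :=
  (isOpen_atypicalSet K z κ x).union <| isOpen_biUnion fun _ _ =>
    (isOpen_atypicalSet K z κ x).preimage (continuous_id.update _ continuous_const)

lemma unif_update_mem_resonantSet_le (hK : K.IsSymm) (hz : z.im ≠ 0) {θ : ℝ} (hκ : 0 ≤ κ)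
    (hθ : 0 < θ) (hκθ : 12 * κ ≤ θ ^ 2) (x : ι) (u : ι → ℝ) :
    unif {τ | Function.update u x τ ∈ resonantSet K z κ x} ≤
      (1 + 3 * Fintype.card ι) * ENNReal.ofReal (2 * θ) := by
  have hatyp := unif_update_mem_atypicalSet_le hK hz hκ hθ hκθ x
  have hslice : {τ | Function.update u x τ ∈ resonantSet K z κ x} ⊆
      {τ | Function.update u x τ ∈ atypicalSet K z κ x} ∪ ⋃ p ∈ Finset.univ.erase x ×ˢ probes,
        {τ | Function.update (Function.update u p.1 p.2) x τ ∈ atypicalSet K z κ x} := by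
    rintro τ (h | h)
    · exact Or.inl h
    · obtain ⟨p, hp, h⟩ := Set.mem_iUnion₂.1 h
      have hpx : p.1 ≠ x := Finset.ne_of_mem_erase (Finset.mem_product.1 hp).1
      refine Or.inr (Set.mem_iUnion₂.2 ⟨p, hp, ?_⟩)
      rwa [Set.mem_ofPred_eq, Function.update_comm hpx]
  have hcard : (Finset.univ.erase x ×ˢ probes).card ≤ 3 * Fintype.card ι := by
    rw [Finset.card_product, mul_comm]
    exact Nat.mul_le_mul Finset.card_le_three (Finset.card_erase_le)
  calc unif {τ | Function.update u x τ ∈ resonantSet K z κ x}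
      ≤ ENNReal.ofReal (2 * θ) +
          ∑ p ∈ Finset.univ.erase x ×ˢ probes, ENNReal.ofReal (2 * θ) := by
        refine (measure_mono hslice).trans ((measure_union_le _ _).trans ?_)
        refine add_le_add (hatyp u) ((measure_biUnion_finset_le _ _).trans ?_)
        exact Finset.sum_le_sum fun p _ => hatyp _
    _ ≤ ENNReal.ofReal (2 * θ) + (3 * Fintype.card ι : ℕ) * ENNReal.ofReal (2 * θ) := by
        rw [Finset.sum_const, nsmul_eq_mul]
        gcongr
    _ = (1 + 3 * Fintype.card ι) * ENNReal.ofReal (2 * θ) := by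
        push_cast
        ring

lemma mul_norm_charDet_update_le (hu : u ∉ atypicalSet K z κ x) {ν : ℝ} (hν : ν ∈ probes) :
    κ * ‖charDet K z (Function.update u x ν)‖ ≤ ‖charDet K z u‖ :=
  not_lt.1 fun h => hu ⟨ν, hν, h⟩

lemma norm_green_le_of_not_mem_atypicalSet (hK : K.IsSymm) (hz : z.im ≠ 0)
    (hG : shiftedHam K z u * G = 1) (hκ : 0 < κ) {x : ι} (hux : |u x| ≤ 1)
    (hu : u ∉ atypicalSet K z κ x) :
    ‖G (x, false) (x, true)‖ ≤ 5 / 2 * κ⁻¹ ∧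
      ‖G (x, false) (x, true) ^ 2 - G (x, false) (x, false) * G (x, true) (x, true)‖ ≤
        2 * κ⁻¹ := by
  have hdet : 0 < ‖charDet K z u‖ := norm_pos_iff.2 (charDet_ne_zero hK hz u)
  obtain ⟨h₁, h₂⟩ := norm_coeff_le_of_probes (q₀ := 1) (B := κ⁻¹) hux fun ν hν => by
    have h := mul_norm_charDet_update_le hu hν
    rw [charDet_update hK hG, norm_mul] at h
    rw [← one_div, le_div_iff₀ hκ]
    refine le_of_mul_le_mul_left ?_ hdet
    linarith
  rw [norm_mul, Complex.norm_ofNat] at h₁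
  exact ⟨by linarith, h₂⟩

lemma norm_two_mul_sub_blockPerm_le (hK : K.IsSymm) (hz : z.im ≠ 0)
    (hG : shiftedHam K z u * G = 1) (hκ : 0 < κ) {x y : ι} (hxy : x ≠ y) (hux : |u x| ≤ 1)
    (huy : |u y| ≤ 1) (hy : u ∉ atypicalSet K z κ y)
    (hx : ∀ ν ∈ probes, Function.update u y ν ∉ atypicalSet K z κ x) :
    ‖2 * (G (x, false) (x, true) * G (y, false) (y, true)) - blockPerm G x y‖ ≤
      25 / 2 * κ⁻¹ ^ 2 := by
  have hdet : 0 < ‖charDet K z u‖ := norm_pos_iff.2 (charDet_ne_zero hK hz u)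
  obtain ⟨p, r, q₀, q₂, h⟩ := exists_det_add_smul_siteFlip_add_smul_siteFlip hG
    (isSymm_of_shiftedHam_mul_eq_one hK hG) x y
  have hratio : ∀ ν ∈ probes, ∀ ν' ∈ probes,
      ‖p (ν - u y) + (q₀ + 2 * (2 * (G (x, false) (x, true) * G (y, false) (y, true)) -
          blockPerm G x y) * (ν - u y) + q₂ * (ν - u y) ^ 2) * (ν' - u x) +
        r (ν - u y) * (ν' - u x) ^ 2‖ ≤ κ⁻¹ ^ 2 := by
    intro ν hν ν' hν'
    have hyx := mul_norm_charDet_update_le hy hν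
    have hxy' := mul_norm_charDet_update_le (hx ν hν) hν'
    rw [charDet, shiftedHam_update, shiftedHam_update, Function.update_of_ne hxy, add_right_comm, h,
      norm_mul, ← charDet] at hxy'
    rw [inv_pow, ← one_div, le_div_iff₀ (by positivity)]
    refine le_of_mul_le_mul_left ?_ hdet
    linarith [mul_le_mul_of_nonneg_left hxy' hκ.le]
  have h₁ := (norm_coeff_le_of_probes huy fun ν hν =>
    (norm_coeff_le_of_probes hux (hratio ν hν)).1).1
  rw [norm_mul, Complex.norm_ofNat] at h₁
  linarith

lemma isTempered_of_not_mem_resonantSet (hK : K.IsSymm) (hz : z.im ≠ 0)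
    (hG : shiftedHam K z u * G = 1) (hκ : 0 < κ) (hκ1 : κ ≤ 1) (hu : ∀ x, |u x| ≤ 1)
    (hres : ∀ x, u ∉ resonantSet K z κ x) : IsTempered G (5 * κ⁻¹) := by
  have hκi : 1 ≤ κ⁻¹ := (one_le_inv₀ hκ).2 hκ1
  have hatyp : ∀ x, u ∉ atypicalSet K z κ x := fun x h => hres x (Or.inl h)
  have hoff : ∀ x, ‖G (x, false) (x, true)‖ ≤ 5 / 2 * κ⁻¹ := fun x =>
    (norm_green_le_of_not_mem_atypicalSet hK hz hG hκ (hu x) (hatyp x)).1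
  have hoff_mul : ∀ x y, ‖G (x, false) (x, true) * G (y, false) (y, true)‖ ≤
      25 / 4 * κ⁻¹ ^ 2 := fun x y => by
    rw [norm_mul]
    calc _ ≤ (5 / 2 * κ⁻¹) * (5 / 2 * κ⁻¹) := by gcongr <;> exact hoff _
      _ = 25 / 4 * κ⁻¹ ^ 2 := by ring
  have hdiag : ∀ x, ‖G (x, false) (x, false) * G (x, true) (x, true)‖ ≤
      33 / 4 * κ⁻¹ ^ 2 := fun x => by
    have hminor := (norm_green_le_of_not_mem_atypicalSet hK hz hG hκ (hu x) (hatyp x)).2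
    have hsub := norm_sub_norm_le (G (x, false) (x, false) * G (x, true) (x, true))
      (G (x, false) (x, true) * G (x, false) (x, true))
    rw [norm_sub_rev, ← sq] at hsub
    have hsq := hoff_mul x x
    rw [← sq] at hsq
    nlinarith
  refine ⟨fun x => ?_, fun x y => ?_⟩
  · rw [← norm_mul]
    exact (hdiag x).trans (by nlinarith)
  · obtain rfl | hxy := eq_or_ne x y
    · have hsymm := (isSymm_of_shiftedHam_mul_eq_one hK hG).apply (x, false) (x, true)
      rw [blockPerm, hsymm]
      refine (norm_add_le _ _).trans ?_
      linarith [hdiag x, hoff_mul x x, sq_nonneg κ⁻¹]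
    · have hprobe : ∀ ν ∈ probes, Function.update u y ν ∉ atypicalSet K z κ x := fun ν hν h =>
        hres x (Or.inr (Set.mem_iUnion₂.2 ⟨(y, ν), by simp [hxy.symm, hν], h⟩))
      have hperm := norm_two_mul_sub_blockPerm_le hK hz hG hκ hxy (hu x) (hu y) (hatyp y) hprobe
      have hsub := norm_sub_norm_le (blockPerm G x y)
        (2 * (G (x, false) (x, true) * G (y, false) (y, true)))
      rw [norm_sub_rev, norm_mul, Complex.norm_ofNat] at hsub
      linarith [hoff_mul x y]

end TypicalPotentials

section Operators

variable {ι : Type*} [Fintype ι] [DecidableEq ι] {K : Matrix ι ι ℝ}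

/-- `rotHam K u` as an operator on the Euclidean space of states. -/
noncomputable def rotOp (K : Matrix ι ι ℝ) (u : ι → ℝ) :
    Module.End ℝ (EuclideanSpace ℝ (ι × Bool)) := (rotHam K u).toEuclideanLin

/-- `siteFlip x` as an operator on the Euclidean space of states. -/
noncomputable def siteOp (x : ι) : Module.End ℝ (EuclideanSpace ℝ (ι × Bool)) :=
  (siteFlip x).toEuclideanLin

lemma rotOp_isSymmetric (hK : K.IsSymm) (u : ι → ℝ) : (rotOp K u).IsSymmetric :=
  isSymmetric_toEuclideanLin_iff.2 <|
    (conjTranspose_eq_transpose_of_trivial _).trans (rotHam_isSymm hK u)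

lemma siteOp_isSymmetric (x : ι) : (siteOp x).IsSymmetric := by
  rw [siteOp, isSymmetric_toEuclideanLin_iff]
  ext ⟨y, a⟩ ⟨z, b⟩
  simp [siteFlip]
  grind

lemma rotOp_update (K : Matrix ι ι ℝ) (u : ι → ℝ) (x : ι) (τ : ℝ) :
    rotOp K (Function.update u x τ) = rotOp K u + (τ - u x) • siteOp x := by
  rw [rotOp, rotHam_update, map_add, map_smul, rotOp, siteOp]

lemma siteOp_apply (x : ι) (v : EuclideanSpace ℝ (ι × Bool)) (y : ι) (b : Bool) :
    siteOp x v (y, b) = if y = x then v (x, !b) else 0 := by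
  have hsum : siteOp x v (y, b) = ∑ t, siteFlip x (y, b) t * v t := rfl
  rw [hsum, Finset.sum_eq_single (x, !b)]
  · simp [siteFlip]
  · rintro ⟨z, c⟩ - hzc
    have hcb : c = !b → z ≠ x := fun hc hz => hzc (by rw [hc, hz])
    cases b <;> cases c <;> simp_all [siteFlip]
  · simp

end Operators

section AlmostEigenspaces

variable {E : Type*} [NormedAddCommGroup E] [NormedSpace ℝ E] {T : E →ₗ[ℝ] E} {e e' ρ ρ' : ℝ}
  {W : Submodule ℝ E}

/-- On the subspace `W` the operator `T` is the scalar `e`, up to an error `ρ`. -/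
def IsAlmostEigenspace (T : E →ₗ[ℝ] E) (e ρ : ℝ) (W : Submodule ℝ E) : Prop :=
  ∀ v ∈ W, ‖T v - e • v‖ ≤ ρ * ‖v‖

lemma IsAlmostEigenspace.of_abs_sub_le (h : IsAlmostEigenspace T e ρ W) (he : |e - e'| ≤ ρ') :
    IsAlmostEigenspace T e' (ρ + ρ') W := fun v hv => by
  calc ‖T v - e' • v‖ = ‖(T v - e • v) + (e - e') • v‖ := by rw [sub_smul, sub_add_sub_cancel]
    _ ≤ ρ * ‖v‖ + |e - e'| * ‖v‖ := (norm_add_le _ _).trans (add_le_add (h v hv) (norm_smul _ _).le)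
    _ ≤ (ρ + ρ') * ‖v‖ := by rw [add_mul]; gcongr

end AlmostEigenspaces

section WegnerEstimate

variable {ι : Type*} [Fintype ι] [DecidableEq ι] {K : Matrix ι ι ℝ} {e ρ κ θ : ℝ} {u : ι → ℝ}

lemma sum_norm_sq_shiftedHam_mulVec (K : Matrix ι ι ℝ) (e ρ : ℝ) (u : ι → ℝ)
    (v : EuclideanSpace ℝ (ι × Bool)) :
    ∑ i, ‖(shiftedHam K ⟨e, ρ⟩ u *ᵥ (Complex.ofReal ∘ v)) i‖ ^ 2 =
      ‖rotOp K u v - e • v‖ ^ 2 + ρ ^ 2 * ‖v‖ ^ 2 := by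
  have happly : ∀ i, (shiftedHam K ⟨e, ρ⟩ u *ᵥ (Complex.ofReal ∘ v)) i =
      ⟨(rotOp K u v - e • v) i, -(ρ * v i)⟩ := fun i => by
    have hrot : rotOp K u v i = ∑ j, rotHam K u i j * v j := rfl
    rw [shiftedHam, sub_mulVec, smul_mulVec, one_mulVec]
    apply Complex.ext <;> simp [mulVec, dotProduct, hrot]
  rw [EuclideanSpace.norm_sq_eq, EuclideanSpace.norm_sq_eq, Finset.mul_sum,
    ← Finset.sum_add_distrib]
  refine Finset.sum_congr rfl fun i _ => ?_
  rw [happly, Complex.sq_norm, Complex.normSq_mk, Real.norm_eq_abs, Real.norm_eq_abs, sq_abs,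
    sq_abs]
  ring

lemma exists_mem_resonantSet (hK : K.IsSymm) (hρ : 0 < ρ) (hρ1 : ρ ≤ 1) (hκ : 0 < κ)
    (hκ1 : κ ≤ 1) (hsmall : 1400 * Fintype.card ι ^ 3 * κ⁻¹ ^ 2 * √ρ < 1) (hu : ∀ x, |u x| ≤ 1)
    {v : EuclideanSpace ℝ (ι × Bool)} (hv : v ≠ 0) (hv' : ‖rotOp K u v - e • v‖ ≤ ρ * ‖v‖) :
    ∃ x, u ∈ resonantSet K ⟨e, ρ⟩ κ x := by
  by_contra! hres
  have hz : (⟨e, ρ⟩ : ℂ).im ≠ 0 := hρ.ne'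
  obtain ⟨G, hG⟩ := (isUnit_shiftedHam hK hz u).exists_right_inv
  have hnorm : ‖v‖ ^ 2 = ∑ i, ‖(Complex.ofReal ∘ v) i‖ ^ 2 := by
    rw [EuclideanSpace.norm_sq_eq]
    simp
  have hκi : 1 ≤ κ⁻¹ := (one_le_inv₀ hκ).2 hκ1
  have h := (isTempered_of_not_mem_resonantSet hK hz hG hκ hκ1 hu hres).one_le_of_almost_eigenvector
    (v := Complex.ofReal ∘ v) (w := √ρ) hK hG (by linarith) (Real.sq_sqrt hρ.le).symm
    (Real.sqrt_pos.2 hρ) (Real.sqrt_le_one.2 hρ1) ?_ ?_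
  · linarith [show 56 * (Fintype.card ι : ℝ) ^ 3 * (5 * κ⁻¹) ^ 2 * √ρ =
      1400 * Fintype.card ι ^ 3 * κ⁻¹ ^ 2 * √ρ by ring]
  · refine fun h0 => hv ?_
    ext i
    simpa using congrFun h0 i
  · rw [sum_norm_sq_shiftedHam_mulVec, ← hnorm]
    have := pow_le_pow_left₀ (norm_nonneg _) hv' 2
    rw [mul_pow] at this
    linarith

/-- The potentials for which the Hamiltonian has an almost eigenspace of dimension at least `N`,
with energy `e` and width `ρ`. -/
def almostEigenSet (K : Matrix ι ι ℝ) (e ρ : ℝ) (N : ℕ) : Set (ι → ℝ) :=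
  {u | ∃ W : Submodule ℝ (EuclideanSpace ℝ (ι × Bool)),
    N ≤ Module.finrank ℝ W ∧ IsAlmostEigenspace (rotOp K u) e ρ W}

lemma almostEigenSet_subset_of_abs_sub_le (K : Matrix ι ι ℝ) (N : ℕ) {e' ρ' : ℝ}
    (he : |e - e'| ≤ ρ') : almostEigenSet K e ρ N ⊆ almostEigenSet K e' (ρ + ρ') N :=
  fun _ ⟨W, hN, hW⟩ => ⟨W, hN, hW.of_abs_sub_le he⟩

lemma update_mem_almostEigenSet {N : ℕ} (hu : u ∈ almostEigenSet K e ρ (N + 2)) (x : ι) (τ : ℝ) :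
    Function.update u x τ ∈ almostEigenSet K e ρ N := by
  obtain ⟨W, hN, hW⟩ := hu
  let atSite : W →ₗ[ℝ] Bool → ℝ :=
    LinearMap.pi fun b => (EuclideanSpace.projₗ (x, b)).comp W.subtype
  refine ⟨(LinearMap.ker atSite).map W.subtype, ?_, ?_⟩
  · rw [Submodule.finrank_map_subtype_eq]
    have hrank := LinearMap.finrank_range_add_finrank_ker atSite
    have hrange : Module.finrank ℝ (LinearMap.range atSite) ≤ 2 := by
      simpa using Submodule.finrank_le (LinearMap.range atSite)
    omega
  · rintro _ ⟨v, hv, rfl⟩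
    have hsite : siteOp x (v : EuclideanSpace ℝ (ι × Bool)) = 0 := by
      ext ⟨y, b⟩
      rw [siteOp_apply]
      split_ifs
      · exact congrFun (LinearMap.mem_ker.1 hv) (!b)
      · rfl
    rw [rotOp_update, LinearMap.add_apply, LinearMap.smul_apply, Submodule.subtype_apply, hsite,
      smul_zero, add_zero]
    exact hW v v.2

instance (ι : Type*) [Fintype ι] : IsProbabilityMeasure (unifPi ι) := by
  unfold unifPi
  infer_instance

lemma unifPi_almostEigenSet_add_two_le (hK : K.IsSymm) (hρ : 0 < ρ) (hρ1 : ρ ≤ 1) (hκ : 0 < κ)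
    (hκ1 : κ ≤ 1) (hsmall : 1400 * Fintype.card ι ^ 3 * κ⁻¹ ^ 2 * √ρ < 1) (hθ : 0 < θ)
    (hκθ : 12 * κ ≤ θ ^ 2) (e : ℝ) (N : ℕ) :
    unifPi ι (almostEigenSet K e ρ (N + 2)) ≤
      Fintype.card ι * (1 + 3 * Fintype.card ι) * ENNReal.ofReal (2 * θ) *
        unifPi ι (almostEigenSet K e ρ N) := by
  set A := almostEigenSet K e ρ (N + 2)
  have hcover : A ≤ᵐ[unifPi ι] ⋃ x, A ∩ resonantSet K ⟨e, ρ⟩ κ x := by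
    filter_upwards [ae_abs_le_one ι] with u hu huA
    obtain ⟨W, hN, hW⟩ := id huA
    obtain ⟨v, hvW, hv⟩ := W.exists_mem_ne_zero_of_ne_bot (by rintro rfl; simp at hN)
    obtain ⟨x, hx⟩ := exists_mem_resonantSet hK hρ hρ1 hκ hκ1 hsmall hu hv (hW v hvW)
    exact Set.mem_iUnion.2 ⟨x, huA, hx⟩
  have hsite : ∀ x, unifPi ι (A ∩ resonantSet K ⟨e, ρ⟩ κ x) ≤
      (1 + 3 * Fintype.card ι) * ENNReal.ofReal (2 * θ) * unifPi ι (almostEigenSet K e ρ N) :=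
    fun x => pi_inter_le_mul_of_update_mem (fun _ => unif) x
      (isOpen_resonantSet K ⟨e, ρ⟩ κ x).measurableSet
      (fun _ hu => update_mem_almostEigenSet hu x)
      (unif_update_mem_resonantSet_le hK hρ.ne' hκ.le hθ hκθ x)
  calc unifPi ι A ≤ ∑ x, unifPi ι (A ∩ resonantSet K ⟨e, ρ⟩ κ x) :=
        (measure_mono_ae hcover).trans (measure_iUnion_fintype_le _ _)
    _ ≤ Fintype.card ι • _ := Finset.sum_le_card_nsmul _ _ _ fun x _ => hsite x
    _ = _ := by
        rw [nsmul_eq_mul]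
        ring

lemma unifPi_almostEigenSet_two_mul_le (hK : K.IsSymm) (hρ : 0 < ρ) (hρ1 : ρ ≤ 1) (hκ : 0 < κ)
    (hκ1 : κ ≤ 1) (hsmall : 1400 * Fintype.card ι ^ 3 * κ⁻¹ ^ 2 * √ρ < 1) (hθ : 0 < θ)
    (hκθ : 12 * κ ≤ θ ^ 2) (e : ℝ) (k : ℕ) :
    unifPi ι (almostEigenSet K e ρ (2 * k)) ≤
      (Fintype.card ι * (1 + 3 * Fintype.card ι) * ENNReal.ofReal (2 * θ)) ^ k := by
  induction k with
  | zero => simpa using prob_le_one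
  | succ k ih =>
    rw [pow_succ', mul_add]
    refine (unifPi_almostEigenSet_add_two_le hK hρ hρ1 hκ hκ1 hsmall hθ hκθ e (2 * k)).trans ?_
    gcongr

end WegnerEstimate

section EnergyGrid

variable {Ω : Type*} [MeasurableSpace Ω] {θ : ℝ}

lemma measure_exists_abs_le_le (μ : Measure Ω) (S : ℝ → Set Ω) (hθ : 0 < θ) (L : ℝ)
    {p : ENNReal} (hp : ∀ a, μ {ω | ∃ e ∈ Set.Icc a (a + θ), ω ∈ S e} ≤ p) :
    μ {ω | ∃ e, |e| ≤ L ∧ ω ∈ S e} ≤ (⌊2 * L / θ⌋₊ + 1 : ℕ) * p := by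
  let cell (k : ℕ) : Set Ω := {ω | ∃ e ∈ Set.Icc (-L + k * θ) (-L + k * θ + θ), ω ∈ S e}
  have hgrid : {ω | ∃ e, |e| ≤ L ∧ ω ∈ S e} ⊆ ⋃ k ∈ Finset.range (⌊2 * L / θ⌋₊ + 1), cell k := by
    rintro ω ⟨e, he, hω⟩
    obtain ⟨hLe, heL⟩ := abs_le.1 he
    have hlow := Nat.floor_le (div_nonneg (by linarith) hθ.le : 0 ≤ (e + L) / θ)
    have hupp := Nat.lt_floor_add_one ((e + L) / θ)
    rw [le_div_iff₀ hθ] at hlow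
    rw [div_lt_iff₀ hθ] at hupp
    refine Set.mem_iUnion₂.2 ⟨⌊(e + L) / θ⌋₊, ?_, e, ⟨by linarith, by linarith⟩, hω⟩
    rw [Finset.mem_range, Nat.lt_succ_iff]
    exact Nat.floor_le_floor (by gcongr; linarith)
  calc μ {ω | ∃ e, |e| ≤ L ∧ ω ∈ S e}
      ≤ ∑ k ∈ Finset.range (⌊2 * L / θ⌋₊ + 1), μ (cell k) :=
        (measure_mono hgrid).trans (measure_biUnion_finset_le _ _)
    _ ≤ ∑ _k ∈ Finset.range (⌊2 * L / θ⌋₊ + 1), p := Finset.sum_le_sum fun k _ => hp _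
    _ = (⌊2 * L / θ⌋₊ + 1 : ℕ) * p := by rw [Finset.sum_const, Finset.card_range, nsmul_eq_mul]

end EnergyGrid

section CrowdedSet

variable {ι : Type*} [Fintype ι] [DecidableEq ι] {K : Matrix ι ι ℝ} {ε : ℝ}

lemma unifPi_almostEigenSet_forty_le (hK : K.IsSymm) (hε : 0 < ε) (hε1 : ε ≤ 1 / 10 ^ 6)
    (hV : Fintype.card ι * ε ≤ 1) (e : ℝ) :
    unifPi ι (almostEigenSet K e (ε ^ 488) 40) ≤ ENNReal.ofReal (ε ^ 540) := by
  have hε1' : ε ≤ 1 := hε1.trans (by norm_num)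
  set V : ℝ := (Fintype.card ι : ℝ)
  have hsmall : 1400 * V ^ 3 * (ε ^ 60)⁻¹ ^ 2 * √(ε ^ 488) < 1 := by
    have hsqrt : √(ε ^ 488) = ε ^ 244 := by
      rw [pow_mul ε 244 2, Real.sqrt_sq (by positivity)]
    calc 1400 * V ^ 3 * (ε ^ 60)⁻¹ ^ 2 * √(ε ^ 488)
        = 1400 * (V * ε) ^ 3 * ε * ε ^ 120 := by rw [hsqrt]; field_simp
      _ ≤ 1400 * 1 ^ 3 * (1 / 10 ^ 6) * 1 := by
          gcongr
          exact pow_le_one₀ hε.le hε1'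
      _ < 1 := by norm_num
  have hfactor : V * (1 + 3 * V) * (2 * (4 * ε ^ 30)) ≤ ε ^ 27 := by
    calc V * (1 + 3 * V) * (2 * (4 * ε ^ 30))
        = 8 * ε * (V * ε * ε + 3 * (V * ε) ^ 2) * ε ^ 27 := by ring
      _ ≤ 8 * (1 / 10 ^ 6) * (1 * 1 + 3 * 1 ^ 2) * ε ^ 27 := by gcongr
      _ ≤ ε ^ 27 := mul_le_of_le_one_left (by positivity) (by norm_num)
  refine (unifPi_almostEigenSet_two_mul_le hK (by positivity) (pow_le_one₀ hε.le hε1')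
    (by positivity) (pow_le_one₀ hε.le hε1') hsmall (θ := 4 * ε ^ 30) (by positivity)
    (by nlinarith [pow_pos hε 60]) e 20).trans ?_
  have hcount : (Fintype.card ι * (1 + 3 * Fintype.card ι) : ENNReal) =
      ENNReal.ofReal (V * (1 + 3 * V)) := by
    have hcast : V * (1 + 3 * V) = (Fintype.card ι * (1 + 3 * Fintype.card ι) : ℕ) := by
      push_cast
      rfl
    rw [hcast, ENNReal.ofReal_natCast]
    push_cast
    rfl
  calc (Fintype.card ι * (1 + 3 * Fintype.card ι) * ENNReal.ofReal (2 * (4 * ε ^ 30))) ^ 20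
      = ENNReal.ofReal ((V * (1 + 3 * V) * (2 * (4 * ε ^ 30))) ^ 20) := by
        rw [hcount, ← ENNReal.ofReal_mul (by positivity), ENNReal.ofReal_pow (by positivity)]
    _ ≤ ENNReal.ofReal ((ε ^ 27) ^ 20) := by gcongr
    _ = ENNReal.ofReal (ε ^ 540) := by rw [← pow_mul]

/-- The potentials for which some energy window of width of order `ε ^ 488` carries at least forty
eigenvalues. The bound `3 / ε` covers the whole spectrum when there are at most `1 / ε` sites. -/
def crowdedSet (K : Matrix ι ι ℝ) (ε : ℝ) : Set (ι → ℝ) :=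
  {u | ∃ e, |e| ≤ 3 / ε ∧ u ∈ almostEigenSet K e (ε ^ 488 / 2) 40}

lemma unifPi_crowdedSet_le (hK : K.IsSymm) (hε : 0 < ε) (hε1 : ε ≤ 1 / 10 ^ 6)
    (hV : Fintype.card ι * ε ≤ 1) : unifPi ι (crowdedSet K ε) ≤ ENNReal.ofReal (ε ^ 2) := by
  have hε1' : ε ≤ 1 := hε1.trans (by norm_num)
  have hcell : ∀ a, unifPi ι {u | ∃ e ∈ Set.Icc a (a + ε ^ 488 / 2),
      u ∈ almostEigenSet K e (ε ^ 488 / 2) 40} ≤ ENNReal.ofReal (ε ^ 540) := fun a => by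
    refine (measure_mono ?_).trans (unifPi_almostEigenSet_forty_le hK hε hε1 hV a)
    rintro u ⟨e, he, hu⟩
    rw [← add_halves (ε ^ 488)]
    refine almostEigenSet_subset_of_abs_sub_le K 40 ?_ hu
    rw [abs_of_nonneg (by linarith [he.1])]
    linarith [he.2]
  refine (measure_exists_abs_le_le _ _ (by positivity) (3 / ε) hcell).trans ?_
  rw [← ENNReal.ofReal_natCast, ← ENNReal.ofReal_mul (by positivity)]
  refine ENNReal.ofReal_le_ofReal ?_
  push_cast
  calc (⌊2 * (3 / ε) / (ε ^ 488 / 2)⌋₊ + 1) * ε ^ 540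
      ≤ (2 * (3 / ε) / (ε ^ 488 / 2) + 1) * ε ^ 540 := by
        gcongr
        exact Nat.floor_le (by positivity)
    _ = (12 * ε ^ 49 + ε * ε ^ 537) * ε ^ 2 := by field_simp; ring
    _ ≤ (12 * ε + ε * 1) * ε ^ 2 := by
        gcongr
        · exact pow_le_of_le_one hε.le hε1' (by norm_num)
        · exact pow_le_one₀ hε.le hε1'
    _ ≤ ε ^ 2 := mul_le_of_le_one_left (by positivity) (by linarith)

end CrowdedSet

section SpectralClusters

variable {E : Type*} [NormedAddCommGroup E] [InnerProductSpace ℝ E] [FiniteDimensional ℝ E]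
  {T T' R D : E →ₗ[ℝ] E} {e e' ρ r t κ : ℝ} {W W' : Submodule ℝ E} {ξ : E}

/-- `W` is an almost eigenspace of `T` at energy `e` and width `ρ` that is separated from the rest
of the spectrum by a gap `r`. The gap is expressed by the reduced resolvent `R`, which inverts
`T - e` on the orthogonal complement of `W`. -/
structure IsSpectralCluster (T : E →ₗ[ℝ] E) (e : ℝ) (W : Submodule ℝ E) (R : E →ₗ[ℝ] E)
    (ρ r : ℝ) : Prop where
  isAlmostEigenspace : IsAlmostEigenspace T e ρ W
  resolvent_apply_sub : ∀ v, R (T v - e • v) = v - W.starProjection v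
  norm_resolvent_le : ∀ v, ‖R v‖ ≤ ‖v‖ / r
  resolvent_eq_zero : ∀ v ∈ W, R v = 0

omit [FiniteDimensional ℝ E] in
lemma IsAlmostEigenspace.norm_residual_le (hW' : IsAlmostEigenspace T' e' ρ W')
    (hT' : ∀ v, ‖T' v - T v - t • D v‖ ≤ ρ * ‖v‖) (hξ : ξ ∈ W') :
    ‖T ξ - e' • ξ + t • D ξ‖ ≤ 2 * ρ * ‖ξ‖ := by
  calc ‖T ξ - e' • ξ + t • D ξ‖ = ‖(T' ξ - e' • ξ) - (T' ξ - T ξ - t • D ξ)‖ := by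
        congr 1
        abel
    _ ≤ ρ * ‖ξ‖ + ρ * ‖ξ‖ := (norm_sub_le _ _).trans (add_le_add (hW' ξ hξ) (hT' ξ))
    _ = 2 * ρ * ‖ξ‖ := by ring

omit [FiniteDimensional ℝ E] in
lemma IsAlmostEigenspace.abs_mul_abs_inner_le (hT : T.IsSymmetric)
    (hW : IsAlmostEigenspace T e ρ W) (hW' : IsAlmostEigenspace T' e' ρ W')
    (hT' : ∀ v, ‖T' v - T v - t • D v‖ ≤ ρ * ‖v‖) {ψ : E} (hψ : ψ ∈ W) (hξ : ξ ∈ W')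
    (horth : inner ℝ ψ ξ = 0) : |t| * |inner ℝ ψ (D ξ)| ≤ 3 * ρ * (‖ψ‖ * ‖ξ‖) := by
  have hdefect : |inner ℝ (T ψ - e • ψ) ξ| ≤ ρ * ‖ψ‖ * ‖ξ‖ :=
    (abs_real_inner_le_norm _ _).trans (by gcongr; exact hW ψ hψ)
  have hres : |inner ℝ ψ (T ξ - e' • ξ + t • D ξ)| ≤ ‖ψ‖ * (2 * ρ * ‖ξ‖) :=
    (abs_real_inner_le_norm _ _).trans (by gcongr; exact hW'.norm_residual_le hT' hξ)
  have heq : t * inner ℝ ψ (D ξ) =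
      inner ℝ ψ (T ξ - e' • ξ + t • D ξ) - inner ℝ (T ψ - e • ψ) ξ := by
    simp only [inner_add_right, inner_sub_right, inner_smul_right, inner_sub_left,
      real_inner_smul_left, horth, hT ψ ξ]
    ring
  rw [← abs_mul, heq]
  exact (abs_sub _ _).trans (by linarith)

namespace IsSpectralCluster

lemma sub_starProjection_eq (h : IsSpectralCluster T e W R ρ r) (D : E →ₗ[ℝ] E) (e' t : ℝ)
    (ξ : E) : ξ - W.starProjection ξ =
      (e' - e) • R (ξ - W.starProjection ξ) - t • R (D ξ) + R (T ξ - e' • ξ + t • D ξ) := by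
  conv_lhs => rw [← h.resolvent_apply_sub ξ]
  rw [map_sub R ξ, h.resolvent_eq_zero _ (W.starProjection_apply_mem ξ), sub_zero]
  simp only [map_add, map_sub, map_smul]
  module

variable (h : IsSpectralCluster T e W R ρ r) (hW' : IsAlmostEigenspace T' e' ρ W')
  (hr : 0 < r) (hT' : ∀ v, ‖T' v - T v - t • D v‖ ≤ ρ * ‖v‖) (hD : ∀ v, ‖D v‖ ≤ ‖v‖)

include h hW' hr hT' hD

lemma norm_sub_starProjection_le (he : |e' - e| ≤ r / 2) (hξ : ξ ∈ W') :
    ‖ξ - W.starProjection ξ‖ ≤ 2 * (|t| + 2 * ρ) / r * ‖ξ‖ := by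
  have hexp := h.sub_starProjection_eq D e' t ξ
  set Q := ξ - W.starProjection ξ
  have hQ : ‖Q‖ ≤ r / 2 * (‖Q‖ / r) + |t| * (‖ξ‖ / r) + 2 * ρ * ‖ξ‖ / r := by
    calc ‖Q‖ ≤ ‖(e' - e) • R Q‖ + ‖t • R (D ξ)‖ + ‖R (T ξ - e' • ξ + t • D ξ)‖ :=
          (congrArg norm hexp).trans_le
            ((norm_add_le _ _).trans (add_le_add (norm_sub_le _ _) le_rfl))
      _ ≤ r / 2 * (‖Q‖ / r) + |t| * (‖ξ‖ / r) + 2 * ρ * ‖ξ‖ / r := by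
          rw [norm_smul, norm_smul, Real.norm_eq_abs, Real.norm_eq_abs]
          gcongr
          · exact h.norm_resolvent_le Q
          · exact (h.norm_resolvent_le _).trans (by gcongr; exact hD ξ)
          · exact (h.norm_resolvent_le _).trans (by gcongr; exact hW'.norm_residual_le hT' hξ)
  have hhalf : r / 2 * (‖Q‖ / r) = ‖Q‖ / 2 := by field_simp
  linarith [show 2 * (|t| + 2 * ρ) / r * ‖ξ‖ = 2 * (|t| * (‖ξ‖ / r) + 2 * ρ * ‖ξ‖ / r) by ring]

lemma norm_sub_starProjection_add_smul_le (hξ : ξ ∈ W') :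
    ‖ξ - W.starProjection ξ + t • R (D (W.starProjection ξ))‖ ≤
      ((|e' - e| + |t|) * ‖ξ - W.starProjection ξ‖ + 2 * ρ * ‖ξ‖) / r := by
  have hexp := h.sub_starProjection_eq D e' t ξ
  set Q := ξ - W.starProjection ξ with hQ
  have hrem : Q + t • R (D (W.starProjection ξ)) =
      (e' - e) • R Q - t • R (D Q) + R (T ξ - e' • ξ + t • D ξ) := by
    conv_lhs => rw [hexp]
    rw [hQ, map_sub D, map_sub R (D ξ)]
    module
  calc ‖Q + t • R (D (W.starProjection ξ))‖
      ≤ ‖(e' - e) • R Q‖ + ‖t • R (D Q)‖ + ‖R (T ξ - e' • ξ + t • D ξ)‖ :=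
        (congrArg norm hrem).trans_le
          ((norm_add_le _ _).trans (add_le_add (norm_sub_le _ _) le_rfl))
    _ ≤ |e' - e| * (‖Q‖ / r) + |t| * (‖Q‖ / r) + 2 * ρ * ‖ξ‖ / r := by
        rw [norm_smul, norm_smul, Real.norm_eq_abs, Real.norm_eq_abs]
        gcongr
        · exact h.norm_resolvent_le Q
        · exact (h.norm_resolvent_le _).trans (by gcongr; exact hD Q)
        · exact (h.norm_resolvent_le _).trans (by gcongr; exact hW'.norm_residual_le hT' hξ)
    _ = ((|e' - e| + |t|) * ‖Q‖ + 2 * ρ * ‖ξ‖) / r := by ring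

lemma exists_starProjection_eq (he : |e' - e| ≤ r / 2) (ht : |t| + 2 * ρ ≤ r / 4)
    (hdim : Module.finrank ℝ W = Module.finrank ℝ W') {ψ : E} (hψ : ψ ∈ W) :
    ∃ ξ ∈ W', W.starProjection ξ = ψ ∧ ‖ξ‖ ≤ 2 * ‖ψ‖ := by
  have hbound : ∀ ξ ∈ W', ‖ξ‖ ≤ 2 * ‖W.starProjection ξ‖ := fun ξ hξ => by
    have hsmall : 2 * (|t| + 2 * ρ) / r ≤ 1 / 2 := by
      rw [div_le_iff₀ hr]
      linarith
    have hle := (h.norm_sub_starProjection_le hW' hr hT' hD he hξ).trans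
      (mul_le_mul_of_nonneg_right hsmall (norm_nonneg ξ))
    linarith [norm_sub_norm_le ξ (W.starProjection ξ)]
  let f : W' →ₗ[ℝ] W := (W.orthogonalProjectionOnto : E →ₗ[ℝ] W) ∘ₗ W'.subtype
  have hf : ∀ ξ : W', (f ξ : E) = W.starProjection ξ := fun _ => rfl
  have hinj : Function.Injective f := by
    refine (injective_iff_map_eq_zero f).2 fun ξ hξ => ?_
    have hle := hbound ξ ξ.2
    rw [← hf, hξ] at hle
    simpa using hle
  obtain ⟨ξ, hξ⟩ :=
    (LinearMap.injective_iff_surjective_of_finrank_eq_finrank hdim.symm).1 hinj ⟨ψ, hψ⟩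
  have hproj : W.starProjection (ξ : E) = ψ := by rw [← hf, hξ]
  exact ⟨ξ, ξ.2, hproj, hproj ▸ hbound ξ ξ.2⟩

/- If `ψ' ⟂ ψ` in `W` and `ξ ∈ W'` lifts `ψ`, then `ψ' ⟂ ξ` as well, so `t ⟪ψ', D ξ⟫` is tiny
although `D ξ` is close to `D ψ`. -/
lemma abs_le_of_lt_inner (he : |e' - e| ≤ r / 2) (hρ : 0 ≤ ρ) (hT : T.IsSymmetric)
    (hdim : Module.finrank ℝ W = Module.finrank ℝ W') (hκ : 0 < κ) (hκ1 : κ ≤ 1)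
    (ht : |t| + 2 * ρ ≤ κ * r / 8) {ψ ψ' : E} (hψ : ψ ∈ W) (hψ' : ψ' ∈ W)
    (horth : inner ℝ ψ' ψ = 0) (hform : κ * (‖ψ'‖ * ‖ψ‖) < |inner ℝ ψ' (D ψ)|) :
    |t| ≤ 12 * ρ / κ := by
  obtain ⟨ξ, hξ, hproj, hξn⟩ :=
    h.exists_starProjection_eq hW' hr hT' hD he (by nlinarith) hdim hψ
  have hQ := h.norm_sub_starProjection_le hW' hr hT' hD he hξ
  rw [hproj] at hQ
  have hξorth : inner ℝ ψ' ξ = 0 := by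
    have := W.starProjection_inner_eq_zero ξ ψ' hψ'
    rw [hproj, real_inner_comm, inner_sub_right, horth] at this
    linarith
  have hprod : |t| * |inner ℝ ψ' (D ξ)| ≤ 3 * ρ * (‖ψ'‖ * (2 * ‖ψ‖)) :=
    (h.isAlmostEigenspace.abs_mul_abs_inner_le hT hW' hT' hψ' hξ hξorth).trans (by gcongr)
  have hlift : |inner ℝ ψ' (D (ψ - ξ))| ≤ κ / 2 * (‖ψ'‖ * ‖ψ‖) := by
    calc |inner ℝ ψ' (D (ψ - ξ))| ≤ ‖ψ'‖ * (2 * (|t| + 2 * ρ) / r * ‖ξ‖) :=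
          (abs_real_inner_le_norm _ _).trans
            (by gcongr; exact (hD _).trans ((norm_sub_rev _ _).trans_le hQ))
      _ ≤ ‖ψ'‖ * (2 * (κ * r / 8) / r * (2 * ‖ψ‖)) := by gcongr
      _ = κ / 2 * (‖ψ'‖ * ‖ψ‖) := by field_simp; norm_num
  have hlow : κ / 2 * (‖ψ'‖ * ‖ψ‖) ≤ |inner ℝ ψ' (D ξ)| := by
    have := abs_sub_abs_le_abs_sub (inner ℝ ψ' (D ψ)) (inner ℝ ψ' (D ξ))
    rw [← inner_sub_right, ← map_sub] at this
    linarith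
  have hpos : 0 < ‖ψ'‖ * ‖ψ‖ := by
    have hle := hform.trans_le ((abs_real_inner_le_norm ψ' (D ψ)).trans
      (mul_le_mul_of_nonneg_left (hD ψ) (norm_nonneg ψ')))
    by_contra! h0
    rw [h0.antisymm (by positivity), mul_zero] at hle
    exact lt_irrefl _ hle
  rw [le_div_iff₀ hκ]
  refine le_of_mul_le_mul_right ?_ hpos
  linarith [mul_le_mul_of_nonneg_left hlow (abs_nonneg t)]

end IsSpectralCluster

omit [FiniteDimensional ℝ E] in
lemma two_mul_abs_inner_le_of_isSymmetric {S : E →ₗ[ℝ] E} (hS : S.IsSymmetric)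
    (hS1 : ∀ v, ‖S v‖ ≤ ‖v‖) {ψ : E} (hψ : ‖ψ‖ = 1) (ξ w : E) :
    2 * |inner ℝ (S ψ) w| ≤ |inner ℝ ξ (S ξ)| + |inner ℝ ψ (S ψ)| + ‖ξ - ψ‖ ^ 2 +
      2 * ‖ξ - ψ + w‖ := by
  set Q := ξ - ψ with hQ
  have hSψ : ‖S ψ‖ ≤ 1 := (hS1 ψ).trans hψ.le
  have hlin : |inner ℝ (S ψ) (Q + w)| ≤ ‖Q + w‖ :=
    (abs_real_inner_le_norm _ _).trans (mul_le_of_le_one_left (norm_nonneg _) hSψ)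
  have hquad : |inner ℝ Q (S Q)| ≤ ‖Q‖ ^ 2 := by
    rw [sq]
    exact (abs_real_inner_le_norm _ _).trans (by gcongr; exact hS1 Q)
  have hexp : 2 * inner ℝ (S ψ) w = 2 * inner ℝ (S ψ) (Q + w) -
      (inner ℝ ξ (S ξ) - inner ℝ ψ (S ψ) - inner ℝ Q (S Q)) := by
    have hξ : ξ = ψ + Q := by rw [hQ]; abel
    rw [hξ, map_add, inner_add_left, inner_add_right, inner_add_right, inner_add_right, ← hS ψ Q,
      real_inner_comm Q (S ψ)]
    ring
  rw [← abs_two, ← abs_mul, hexp, abs_two]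
  rw [abs_le] at hlin hquad
  refine abs_le.2 ⟨?_, ?_⟩ <;>
    linarith [neg_abs_le (inner ℝ ξ (S ξ)), le_abs_self (inner ℝ ξ (S ξ)),
      neg_abs_le (inner ℝ ψ (S ψ)), le_abs_self (inner ℝ ψ (S ψ))]

lemma second_order_error_le {κ' : ℝ} (ht0 : 0 ≤ t) (hr : 0 < r) (ht : t ≤ κ' * r ^ 2 / 160)
    (hρκ : ρ ≤ κ * r / 8) :
    (8 * t / r) ^ 2 + 2 * (((κ' * r ^ 2 / 32 + t) * (8 * t / r) + 2 * ρ * 2) / r) ≤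
      t * κ' + κ := by
  calc _ = t * ((80 * t + κ' * r ^ 2 / 2) / r ^ 2) + 8 * ρ / r := by field_simp; ring
    _ ≤ t * κ' + κ := by
        gcongr
        · rw [div_le_iff₀ (by positivity)]
          linarith
        · rw [div_le_iff₀ hr]
          linarith

/- If `ξ ∈ W'` lifts `ψ ∈ W`, then `ξ ≈ ψ - t R D ψ`, so the form of `S` at `ξ` differs from that
at `ψ` by about `2 t ⟪S ψ, R D ψ⟫`; when both are tiny, so is `t`. -/
lemma IsSpectralCluster.abs_le_of_le_inner {S : E →ₗ[ℝ] E} {κ' : ℝ}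
    (h : IsSpectralCluster T e W R ρ r) (hW' : IsAlmostEigenspace T' e' ρ W')
    (hr : 0 < r) (hr1 : r ≤ 1) (hT' : ∀ v, ‖T' v - T v - t • D v‖ ≤ ρ * ‖v‖)
    (hD : ∀ v, ‖D v‖ ≤ ‖v‖) (he : |e' - e| ≤ κ' * r ^ 2 / 32) (hρ : 0 ≤ ρ)
    (hdim : Module.finrank ℝ W = Module.finrank ℝ W') (hS : S.IsSymmetric)
    (hS1 : ∀ v, ‖S v‖ ≤ ‖v‖) (hκ : 0 ≤ κ) (hκ' : 0 < κ') (hκ1 : κ' ≤ 1)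
    (ht : |t| ≤ κ' * r ^ 2 / 160) (hρκ : ρ ≤ κ * r / 8)
    (hq : ∀ v ∈ W, |inner ℝ v (S v)| ≤ 3 * κ * ‖v‖ ^ 2)
    (hq' : ∀ v ∈ W', |inner ℝ v (S v)| ≤ 3 * κ * ‖v‖ ^ 2)
    {ψ : E} (hψ : ψ ∈ W) (hψ1 : ‖ψ‖ = 1) (hform : κ' ≤ |inner ℝ (S ψ) (R (D ψ))|) :
    |t| ≤ 16 * κ / κ' := by
  have hr2 : κ' * r ^ 2 ≤ r := by nlinarith [sq_nonneg r]
  rw [le_div_iff₀ hκ']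
  rcases le_or_gt |t| (2 * ρ) with htρ | htρ
  · nlinarith [abs_nonneg t]
  obtain ⟨ξ, hξ, hproj, hξ2⟩ :=
    h.exists_starProjection_eq hW' hr hT' hD (by linarith) (by linarith) hdim hψ
  have hQ := h.norm_sub_starProjection_le hW' hr hT' hD (by linarith) hξ
  have hrem := h.norm_sub_starProjection_add_smul_le hW' hr hT' hD hξ
  rw [hproj] at hQ hrem
  rw [hψ1, mul_one] at hξ2
  have hQ' : ‖ξ - ψ‖ ≤ 8 * |t| / r := by
    calc ‖ξ - ψ‖ ≤ 2 * (|t| + |t|) / r * 2 := hQ.trans (by gcongr)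
      _ = 8 * |t| / r := by ring
  have hrem' : ‖ξ - ψ + t • R (D ψ)‖ ≤
      ((κ' * r ^ 2 / 32 + |t|) * (8 * |t| / r) + 2 * ρ * 2) / r := hrem.trans (by gcongr)
  have hmain := two_mul_abs_inner_le_of_isSymmetric hS hS1 hψ1 ξ (t • R (D ψ))
  rw [inner_smul_right, abs_mul] at hmain
  have hξform : |inner ℝ ξ (S ξ)| ≤ 12 * κ := by
    calc |inner ℝ ξ (S ξ)| ≤ 3 * κ * 2 ^ 2 := (hq' ξ hξ).trans (by gcongr)
      _ = 12 * κ := by ring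
  have hψform : |inner ℝ ψ (S ψ)| ≤ 3 * κ := by simpa [hψ1] using hq ψ hψ
  have hsq : ‖ξ - ψ‖ ^ 2 ≤ (8 * |t| / r) ^ 2 := by gcongr
  linarith [mul_le_mul_of_nonneg_left hform (abs_nonneg t),
    second_order_error_le (abs_nonneg t) hr ht hρκ]

end SpectralClusters

section QuadraticForms

variable {E : Type*} [NormedAddCommGroup E] [InnerProductSpace ℝ E] {W : Submodule ℝ E}
  {S : E →ₗ[ℝ] E} {κ : ℝ}

lemma exists_norm_eq_inner_eq_zero [FiniteDimensional ℝ E] (hW : 2 ≤ Module.finrank ℝ W) (v : E) :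
    ∃ v' ∈ W, ‖v'‖ = ‖v‖ ∧ inner ℝ v' v = 0 := by
  let f : W →ₗ[ℝ] ℝ := (innerₛₗ ℝ v : E →ₗ[ℝ] ℝ) ∘ₗ W.subtype
  have hker : LinearMap.ker f ≠ ⊥ := fun hbot => by
    have hrank := LinearMap.finrank_range_add_finrank_ker f
    have hrange := Submodule.finrank_le (LinearMap.range f)
    rw [hbot, finrank_bot] at hrank
    rw [Module.finrank_self] at hrange
    omega
  obtain ⟨y, hy, hy0⟩ := Submodule.exists_mem_ne_zero_of_ne_bot hker
  have horth : inner ℝ v (y : E) = 0 := LinearMap.mem_ker.1 hy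
  have hyn : ‖(y : E)‖ ≠ 0 := by simpa using hy0
  refine ⟨(‖v‖ / ‖(y : E)‖) • (y : E), W.smul_mem _ y.2, ?_, ?_⟩
  · rw [norm_smul, norm_div, norm_norm, norm_norm, div_mul_cancel₀ _ hyn]
  · rw [real_inner_smul_left, real_inner_comm, horth, mul_zero]

lemma abs_inner_self_sub_le (hS : S.IsSymmetric)
    (hκ : ∀ v ∈ W, ∀ v' ∈ W, inner ℝ v' v = 0 → |inner ℝ v' (S v)| ≤ κ * (‖v'‖ * ‖v‖))
    {v v' : E} (hv : v ∈ W) (hv' : v' ∈ W) (hnorm : ‖v'‖ = ‖v‖) (horth : inner ℝ v' v = 0) :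
    |inner ℝ v (S v) - inner ℝ v' (S v')| ≤ 2 * κ * ‖v‖ ^ 2 := by
  have horth' : inner ℝ v v' = 0 := (real_inner_comm _ _).trans horth
  have hform : inner ℝ (v - v') (S (v + v')) = inner ℝ v (S v) - inner ℝ v' (S v') := by
    rw [map_add, inner_sub_left, inner_add_right, inner_add_right, ← hS v v',
      real_inner_comm v' (S v)]
    ring
  have hnorms : ‖v - v'‖ * ‖v + v'‖ = 2 * ‖v‖ ^ 2 := by
    have hadd : ‖v + v'‖ = ‖v - v'‖ := by
      rw [← sq_eq_sq₀ (norm_nonneg _) (norm_nonneg _), norm_add_sq_real, norm_sub_sq_real, horth']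
      ring
    rw [hadd, ← sq, norm_sub_sq_real, horth', hnorm]
    ring
  have h := hκ _ (W.add_mem hv hv') _ (W.sub_mem hv hv') <| by
    rw [inner_sub_left, inner_add_right, inner_add_right, horth, horth',
      real_inner_self_eq_norm_sq, real_inner_self_eq_norm_sq, hnorm]
    ring
  rw [hform, hnorms] at h
  linarith

lemma abs_le_three_mul_of_isotropic {A B C p q : ℝ} (hpq : p ≠ 0 ∨ q ≠ 0)
    (h : p ^ 2 * A + 2 * p * q * B + q ^ 2 * C = 0) (hB : |B| ≤ κ) (hAC : |A - C| ≤ 2 * κ) :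
    |A| ≤ 3 * κ := by
  have hpos : 0 < p ^ 2 + q ^ 2 := by rcases hpq with h | h <;> positivity
  have hcross : |2 * p * q * B| ≤ (p ^ 2 + q ^ 2) * κ := by
    rw [abs_mul]
    gcongr
    rw [abs_le]
    constructor <;> nlinarith [sq_nonneg (p + q), sq_nonneg (p - q)]
  have hdiff : |q ^ 2 * (A - C)| ≤ (p ^ 2 + q ^ 2) * (2 * κ) := by
    rw [abs_mul, abs_of_nonneg (sq_nonneg q)]
    gcongr
    exact le_add_of_nonneg_left (sq_nonneg p)
  refine le_of_mul_le_mul_left ?_ hpos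
  calc (p ^ 2 + q ^ 2) * |A| = |q ^ 2 * (A - C) - 2 * p * q * B| := by
        rw [← abs_of_pos hpos, ← abs_mul]
        congr 1
        linarith
    _ ≤ (p ^ 2 + q ^ 2) * (2 * κ) + (p ^ 2 + q ^ 2) * κ :=
        (abs_sub _ _).trans (add_le_add hdiff hcross)
    _ = (p ^ 2 + q ^ 2) * (3 * κ) := by ring

lemma abs_inner_self_le_of_orthogonal [FiniteDimensional ℝ E] (hW : 2 ≤ Module.finrank ℝ W)
    (hS : S.IsSymmetric) {a : E →ₗ[ℝ] ℝ} (ha : ∀ v, a v = 0 → inner ℝ v (S v) = 0)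
    (hκ : ∀ v ∈ W, ∀ v' ∈ W, inner ℝ v' v = 0 → |inner ℝ v' (S v)| ≤ κ * (‖v'‖ * ‖v‖))
    {v : E} (hv : v ∈ W) : |inner ℝ v (S v)| ≤ 3 * κ * ‖v‖ ^ 2 := by
  obtain ⟨v', hv', hnorm, horth⟩ := exists_norm_eq_inner_eq_zero hW v
  have hB : |inner ℝ v' (S v)| ≤ κ * ‖v‖ ^ 2 := by
    simpa only [hnorm, ← sq] using hκ v hv v' hv' horth
  have hAC := abs_inner_self_sub_le hS hκ hv hv' hnorm horth
  rw [mul_assoc] at hAC ⊢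
  by_cases hav : a v = 0
  · rw [ha v hav, abs_zero]
    linarith [abs_nonneg (inner ℝ v' (S v))]
  · refine abs_le_three_mul_of_isotropic (p := a v') (q := -a v) (C := inner ℝ v' (S v'))
      (Or.inr (neg_ne_zero.2 hav)) ?_ hB hAC
    have hzero := ha (a v' • v + -a v • v') (by simp; ring)
    have hBsymm : inner ℝ v (S v') = inner ℝ v' (S v) := by rw [← hS, real_inner_comm]
    simp only [map_add, map_smul, inner_add_left, inner_add_right, real_inner_smul_left,
      inner_smul_right, hBsymm] at hzero
    linarith

end QuadraticForms

section Isolation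

lemma unif_le_of_isolated {A : Set ℝ} {τ ε : ℝ} (hτ : 0 < τ) (hτ1 : τ ≤ 1) (hε : 0 ≤ ε)
    (hA : ∀ s ∈ A, ∀ t ∈ A, |s - t| < τ → |s - t| ≤ ε) : unif A ≤ ENNReal.ofReal (3 * ε / τ) := by
  have hcell : ∀ a, volume {s | ∃ e ∈ Set.Icc a (a + τ / 2), s ∈ A ∩ {e}} ≤ ENNReal.ofReal ε := by
    refine fun a => (Real.volume_le_diam _).trans (Metric.ediam_le ?_)
    rintro s ⟨_, hs, hsA, rfl⟩ t ⟨_, ht, htA, rfl⟩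
    rw [edist_dist, Real.dist_eq]
    refine ENNReal.ofReal_le_ofReal (hA s hsA t htA ?_)
    rw [abs_lt]
    constructor <;> linarith [hs.1, hs.2, ht.1, ht.2]
  have hcard : ((⌊2 * 1 / (τ / 2)⌋₊ + 1 : ℕ) : ℝ) ≤ 6 / τ := by
    have hfloor := Nat.floor_le (show 0 ≤ 2 * 1 / (τ / 2) by positivity)
    have hone : 1 ≤ 1 / τ := by rwa [le_div_iff₀ hτ, one_mul]
    push_cast
    calc (⌊2 * 1 / (τ / 2)⌋₊ + 1 : ℝ) ≤ 2 * 1 / (τ / 2) + 2 * (1 / τ) := by linarith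
      _ = 6 / τ := by ring
  have hvol : volume (A ∩ Set.Icc (-1) 1) ≤ ENNReal.ofReal (6 / τ * ε) := by
    calc volume (A ∩ Set.Icc (-1) 1) ≤ volume {s | ∃ e, |e| ≤ 1 ∧ s ∈ A ∩ {e}} :=
          measure_mono fun s hs => ⟨s, abs_le.2 hs.2, hs.1, rfl⟩
      _ ≤ (⌊2 * 1 / (τ / 2)⌋₊ + 1 : ℕ) * ENNReal.ofReal ε :=
          measure_exists_abs_le_le _ _ (half_pos hτ) 1 hcell
      _ ≤ ENNReal.ofReal (6 / τ * ε) := by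
          rw [← ENNReal.ofReal_natCast, ← ENNReal.ofReal_mul (by positivity)]
          gcongr
  exact (unif_le_ofReal_div_two hvol).trans_eq (by ring_nf)

variable {ι : Type*} {S : Set (ι → ℝ)} {x : ι} {ς τ ε : ℝ}

lemma abs_sub_le_of_mem_closure [Finite ι] (hς : 0 < ς)
    (hS : ∀ u ∈ S, ∀ u' ∈ S, (∀ z, z ≠ x → |u' z - u z| ≤ ς) → |u' x - u x| ≤ τ →
      |u' x - u x| ≤ ε)
    {u u' : ι → ℝ} (hu : u ∈ closure S) (hu' : u' ∈ closure S) (heq : ∀ z, z ≠ x → u' z = u z)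
    (hlt : |u' x - u x| < τ) : |u' x - u x| ≤ ε := by
  obtain ⟨p, hpS, hp⟩ := mem_closure_iff_seq_limit.1 hu
  obtain ⟨p', hpS', hp'⟩ := mem_closure_iff_seq_limit.1 hu'
  have hlim : ∀ z, Filter.Tendsto (fun n => |p' n z - p n z|) Filter.atTop (nhds |u' z - u z|) :=
    fun z => ((tendsto_pi_nhds.1 hp' z).sub (tendsto_pi_nhds.1 hp z)).abs
  have hoff : ∀ᶠ n in Filter.atTop, ∀ z, z ≠ x → |p' n z - p n z| ≤ ς := by
    refine Filter.eventually_all.2 fun z => Filter.eventually_imp_distrib_left.2 fun hz => ?_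
    refine (hlim z).eventually_le_const ?_
    rwa [heq z hz, sub_self, abs_zero]
  refine le_of_tendsto (hlim x) ?_
  filter_upwards [hoff, (hlim x).eventually_le_const hlt] with n hn hnx
  exact hS _ (hpS n) _ (hpS' n) hn hnx

lemma unifPi_le_of_isolated [Fintype ι] (hς : 0 < ς) (hτ : 0 < τ) (hτ1 : τ ≤ 1) (hε : 0 ≤ ε)
    (hS : ∀ u ∈ S, ∀ u' ∈ S, (∀ z, z ≠ x → |u' z - u z| ≤ ς) → |u' x - u x| ≤ τ →
      |u' x - u x| ≤ ε) : unifPi ι S ≤ ENNReal.ofReal (3 * ε / τ) := by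
  classical
  have hslice : ∀ u : ι → ℝ, unif {t | Function.update u x t ∈ closure S} ≤
      ENNReal.ofReal (3 * ε / τ) := fun u => by
    refine unif_le_of_isolated hτ hτ1 hε fun s hs t ht hst => ?_
    have := abs_sub_le_of_mem_closure hς hS ht hs
      (fun z hz => by simp [Function.update_of_ne hz])
    simp only [Function.update_self] at this
    exact this hst
  calc unifPi ι S ≤ unifPi ι (closure S) := measure_mono subset_closure
    _ = ∫⁻ u, unif {t | Function.update u x t ∈ closure S} ∂unifPi ι :=
        pi_eq_lintegral_measure_update_mem _ x isClosed_closure.measurableSet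
    _ ≤ ∫⁻ _, ENNReal.ofReal (3 * ε / τ) ∂unifPi ι := lintegral_mono hslice
    _ = ENNReal.ofReal (3 * ε / τ) := by rw [lintegral_const, measure_univ, mul_one]

end Isolation

section GlobalFlip

variable {ι : Type*} [Fintype ι] [DecidableEq ι]

lemma norm_siteOp_le (x : ι) (v : EuclideanSpace ℝ (ι × Bool)) : ‖siteOp x v‖ ≤ ‖v‖ := by
  rw [← sq_le_sq₀ (norm_nonneg _) (norm_nonneg _), EuclideanSpace.real_norm_sq_eq,
    EuclideanSpace.real_norm_sq_eq, Fintype.sum_prod_type, Fintype.sum_prod_type]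
  refine Finset.sum_le_sum fun z _ => ?_
  simp only [Fintype.sum_bool, siteOp_apply]
  split_ifs with hz
  · rw [hz]
    exact (add_comm _ _).le
  · linarith [sq_nonneg (v (z, true)), sq_nonneg (v (z, false))]

lemma inner_siteOp_self (x : ι) (v : EuclideanSpace ℝ (ι × Bool)) :
    inner ℝ v (siteOp x v) = 2 * (v (x, false) * v (x, true)) := by
  rw [PiLp.inner_apply, Fintype.sum_prod_type, Finset.sum_eq_single x]
  · simp only [Fintype.sum_bool, siteOp_apply, if_true, Bool.not_true, Bool.not_false,
      RCLike.inner_apply, conj_trivial]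
    ring
  · intro z _ hz
    simp [siteOp_apply, hz]
  · simp

lemma rotOp_apply (K : Matrix ι ι ℝ) (u : ι → ℝ) (v : EuclideanSpace ℝ (ι × Bool)) (z : ι)
    (b : Bool) : rotOp K u v (z, b) =
      ∑ y, K z y * v (y, b) + (if b then -1 else 1) * v (z, b) + u z * v (z, !b) := by
  have hsum : rotOp K u v (z, b) = ∑ t, rotHam K u (z, b) t * v t := rfl
  have hsite : ∀ y, ∑ c, rotHam K u (z, b) (y, c) * v (y, c) = K z y * v (y, b) +
      if z = y then (if b then -1 else 1) * v (z, b) + u z * v (z, !b) else 0 := fun y => by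
    rw [Fintype.sum_bool]
    by_cases hz : z = y
    · subst hz
      cases b <;> simp [rotHam] <;> ring
    · cases b <;> simp [rotHam, hz]
  simp only [hsum, Fintype.sum_prod_type, hsite, Finset.sum_add_distrib, Finset.sum_ite_eq,
    Finset.mem_univ, if_true, add_assoc]

lemma rotOp_eq_add_sum (K : Matrix ι ι ℝ) (u u' : ι → ℝ) (v : EuclideanSpace ℝ (ι × Bool)) :
    rotOp K u' v = rotOp K u v + ∑ z, (u' z - u z) • siteOp z v := by
  ext ⟨z, b⟩
  simp only [PiLp.add_apply, rotOp_apply, WithLp.ofLp_sum, Finset.sum_apply, PiLp.smul_apply,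
    siteOp_apply, smul_eq_mul, mul_ite, mul_zero, Finset.sum_ite_eq, Finset.mem_univ, if_true]
  ring

/-- The simultaneous flip of the internal index at every site. -/
noncomputable def flipOp (ι : Type*) [Fintype ι] [DecidableEq ι] :
    Module.End ℝ (EuclideanSpace ℝ (ι × Bool)) := ∑ x, siteOp x

lemma flipOp_apply (v : EuclideanSpace ℝ (ι × Bool)) (z : ι) (b : Bool) :
    flipOp ι v (z, b) = v (z, !b) := by
  simp [flipOp, LinearMap.sum_apply, WithLp.ofLp_sum, Finset.sum_apply, siteOp_apply]

lemma norm_flipOp (v : EuclideanSpace ℝ (ι × Bool)) : ‖flipOp ι v‖ = ‖v‖ := by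
  rw [← sq_eq_sq₀ (norm_nonneg _) (norm_nonneg _), EuclideanSpace.real_norm_sq_eq,
    EuclideanSpace.real_norm_sq_eq, Fintype.sum_prod_type, Fintype.sum_prod_type]
  simp [flipOp_apply, add_comm]

/-- The commutator of the diagonal part of the rotated Hamiltonian at `x` with `siteOp x`, applied
to `v`. -/
noncomputable def siteCommutator (x : ι) (v : EuclideanSpace ℝ (ι × Bool)) :
    EuclideanSpace ℝ (ι × Bool) :=
  WithLp.toLp 2 fun s => if s.1 = x then (if s.2 then -2 else 2) * v (x, !s.2) else 0

lemma rotOp_flipOp_sub (K : Matrix ι ι ℝ) (u : ι → ℝ) (e : ℝ) (v : EuclideanSpace ℝ (ι × Bool)) :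
    rotOp K u (flipOp ι v) - e • flipOp ι v =
      flipOp ι (rotOp K u v - e • v) + ∑ x, siteCommutator x v := by
  ext ⟨z, b⟩
  simp only [PiLp.add_apply, PiLp.sub_apply, PiLp.smul_apply, smul_eq_mul, flipOp_apply,
    rotOp_apply, WithLp.ofLp_sum, Finset.sum_apply, siteCommutator, Finset.sum_ite_eq,
    Finset.mem_univ, if_true]
  cases b <;> simp <;> ring

lemma siteCommutator_sub_smul_siteOp (x : ι) (v : EuclideanSpace ℝ (ι × Bool)) (b : Bool) :
    siteCommutator x v - (if b then -2 else 2 : ℝ) • siteOp x v =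
      EuclideanSpace.single (x, !b) ((if b then 4 else -4) * v (x, b)) := by
  ext ⟨z, c⟩
  simp only [PiLp.sub_apply, PiLp.smul_apply, siteCommutator, siteOp_apply, smul_eq_mul,
    PiLp.single_apply]
  by_cases hz : z = x
  · cases b <;> cases c <;> simp [hz] <;> ring
  · simp [hz]

lemma exists_norm_siteCommutator_sub_le {x : ι} {v : EuclideanSpace ℝ (ι × Bool)} {κ : ℝ}
    (hκ : 0 ≤ κ) (hv : |inner ℝ v (siteOp x v)| ≤ 3 * κ) :
    ∃ c : ℝ, |c| ≤ 2 ∧ ‖siteCommutator x v - c • siteOp x v‖ ≤ 5 * √κ := by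
  obtain ⟨b, hb⟩ : ∃ b, |v (x, b)| ≤ 5 / 4 * √κ := by
    by_contra! hlarge
    have hprod : (5 / 4 * √κ) * (5 / 4 * √κ) ≤ |v (x, false)| * |v (x, true)| := by
      gcongr
      exacts [(hlarge _).le, (hlarge _).le]
    have hpos : 0 < |v (x, false)| * |v (x, true)| :=
      mul_pos ((by positivity : (0 : ℝ) ≤ 5 / 4 * √κ).trans_lt (hlarge _))
        ((by positivity : (0 : ℝ) ≤ 5 / 4 * √κ).trans_lt (hlarge _))
    rw [inner_siteOp_self, abs_mul, abs_mul, abs_two] at hv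
    linarith [Real.mul_self_sqrt hκ, show (5 / 4 * √κ) * (5 / 4 * √κ) = 25 / 16 * (√κ * √κ) by ring]
  refine ⟨if b then -2 else 2, by split_ifs <;> norm_num, ?_⟩
  have habs : |(if b then 4 else -4 : ℝ)| = 4 := by split_ifs <;> norm_num
  rw [siteCommutator_sub_smul_siteOp, PiLp.norm_single, Real.norm_eq_abs, abs_mul, habs]
  linarith

end GlobalFlip

section SecondOrderForms

lemma abs_inner_le_of_abs_inner_self_le {E : Type*} [NormedAddCommGroup E] [InnerProductSpace ℝ E]
    {S : E →ₗ[ℝ] E} (hS : S.IsSymmetric) {W : Submodule ℝ E} {κ : ℝ} (hκ : 0 ≤ κ)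
    (hW : ∀ v ∈ W, |inner ℝ v (S v)| ≤ κ * ‖v‖ ^ 2) {v w : E} (hv : v ∈ W) (hw : w ∈ W)
    (hv1 : ‖v‖ ≤ 1) (hw1 : ‖w‖ ≤ 1) : |inner ℝ v (S w)| ≤ κ := by
  have hadd := hW (v + w) (W.add_mem hv hw)
  have hsub := hW (v - w) (W.sub_mem hv hw)
  have hpolar : 4 * inner ℝ v (S w) =
      inner ℝ (v + w) (S (v + w)) - inner ℝ (v - w) (S (v - w)) := by
    simp only [map_add, map_sub, inner_add_left, inner_add_right, inner_sub_left, inner_sub_right]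
    rw [show inner ℝ w (S v) = inner ℝ v (S w) by rw [← hS, real_inner_comm]]
    ring
  have hnorm : ‖v + w‖ ^ 2 + ‖v - w‖ ^ 2 ≤ 4 := by
    linarith [parallelogram_law_with_norm ℝ v w, mul_le_one₀ hv1 (norm_nonneg v) hv1,
      mul_le_one₀ hw1 (norm_nonneg w) hw1]
  have hbound := mul_le_mul_of_nonneg_left hnorm hκ
  rw [abs_le] at hadd hsub ⊢
  constructor <;> linarith

variable {ι : Type*} [Fintype ι] [DecidableEq ι] {K : Matrix ι ι ℝ} {u : ι → ℝ} {e ρ r κ κ' : ℝ}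
  {W : Submodule ℝ (EuclideanSpace ℝ (ι × Bool))} {R : Module.End ℝ (EuclideanSpace ℝ (ι × Bool))}
  {ψ : EuclideanSpace ℝ (ι × Bool)}

lemma norm_sq_starProjection_flipOp_le (hκ : 0 ≤ κ)
    (hq : ∀ x, ∀ v ∈ W, |inner ℝ v (siteOp x v)| ≤ κ * ‖v‖ ^ 2) (hψ : ψ ∈ W) (hψ1 : ‖ψ‖ = 1) :
    ‖W.starProjection (flipOp ι ψ)‖ ^ 2 ≤ Fintype.card ι * κ := by
  set P := W.starProjection (flipOp ι ψ)
  have hP : P ∈ W := W.starProjection_apply_mem _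
  have hP1 : ‖P‖ ≤ 1 := (W.norm_starProjection_apply_le _).trans (by rw [norm_flipOp, hψ1])
  have horth := W.starProjection_inner_eq_zero (flipOp ι ψ) P hP
  rw [inner_sub_left, real_inner_self_eq_norm_sq, real_inner_comm, sub_eq_zero] at horth
  calc ‖P‖ ^ 2 = ∑ x, inner ℝ P (siteOp x ψ) := by
        rw [← horth, flipOp, LinearMap.sum_apply, inner_sum]
    _ ≤ ∑ _x : ι, κ := Finset.sum_le_sum fun x _ => (le_abs_self _).trans
        (abs_inner_le_of_abs_inner_self_le (siteOp_isSymmetric x) hκ (hq x) hP hψ hP1 hψ1.le)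
    _ = Fintype.card ι * κ := by rw [Finset.sum_const, Finset.card_univ, nsmul_eq_mul]

lemma inner_flipOp_resolvent_siteCommutator_le (h : IsSpectralCluster (rotOp K u) e W R ρ r)
    (hr : 0 < r) (hκ : 0 ≤ κ) {x : ι} (hx : |inner ℝ ψ (siteOp x ψ)| ≤ 3 * κ) (hψ1 : ‖ψ‖ = 1)
    (hκ' : ∀ y, |inner ℝ (siteOp y ψ) (R (siteOp x ψ))| ≤ κ') :
    inner ℝ (flipOp ι ψ) (R (siteCommutator x ψ)) ≤
      2 * Fintype.card ι * κ' + 5 * √κ / r := by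
  obtain ⟨c, hc, herr⟩ := exists_norm_siteCommutator_sub_le hκ hx
  have hflip : |inner ℝ (flipOp ι ψ) (R (siteOp x ψ))| ≤ Fintype.card ι * κ' := by
    rw [flipOp, LinearMap.sum_apply, sum_inner]
    refine (Finset.abs_sum_le_sum_abs _ _).trans ((Finset.sum_le_sum fun y _ => hκ' y).trans ?_)
    rw [Finset.sum_const, Finset.card_univ, nsmul_eq_mul]
  have hmain : inner ℝ (flipOp ι ψ) (R (c • siteOp x ψ)) ≤ 2 * (Fintype.card ι * κ') := by
    rw [map_smul, inner_smul_right]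
    refine (le_abs_self _).trans ?_
    rw [abs_mul]
    gcongr
  have hrest : inner ℝ (flipOp ι ψ) (R (siteCommutator x ψ - c • siteOp x ψ)) ≤ 5 * √κ / r := by
    refine (real_inner_le_norm _ _).trans ?_
    rw [norm_flipOp, hψ1, one_mul]
    exact (h.norm_resolvent_le _).trans (by gcongr)
  rw [map_sub, inner_sub_right] at hrest
  linarith

/- Writing `φ` for the global flip of `ψ`, the first-order smallness puts `φ` almost entirely
outside `W`, so that `⟨φ, R (T - e) φ⟩` is almost `1`. The vector `(T - e) φ` is the flip of the
small vector `(T - e) ψ` up to a sum of commutators, each nearly proportional to a `siteOp x ψ`. -/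
lemma IsSpectralCluster.exists_le_abs_inner_resolvent
    (h : IsSpectralCluster (rotOp K u) e W R ρ r) (hr : 0 < r) (hκ : 0 ≤ κ)
    (hq : ∀ x, ∀ v ∈ W, |inner ℝ v (siteOp x v)| ≤ 3 * κ * ‖v‖ ^ 2)
    (hsmall : Fintype.card ι * (3 * κ) + ρ / r +
      Fintype.card ι * (2 * Fintype.card ι * κ' + 5 * √κ / r) < 1)
    (hψ : ψ ∈ W) (hψ1 : ‖ψ‖ = 1) :
    ∃ x y, κ' ≤ |inner ℝ (siteOp x ψ) (R (siteOp y ψ))| := by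
  by_contra! hlt
  set φ := flipOp ι ψ with hφ
  have hφ1 : ‖φ‖ = 1 := (norm_flipOp ψ).trans hψ1
  have hproj : ‖W.starProjection φ‖ ^ 2 ≤ Fintype.card ι * (3 * κ) :=
    norm_sq_starProjection_flipOp_le (by positivity) hq hψ hψ1
  have hinv : inner ℝ φ (R (rotOp K u φ - e • φ)) = 1 - ‖W.starProjection φ‖ ^ 2 := by
    have horth := W.starProjection_inner_eq_zero φ _ (W.starProjection_apply_mem φ)
    rw [inner_sub_left, real_inner_self_eq_norm_sq, sub_eq_zero] at horth
    rw [h.resolvent_apply_sub, inner_sub_right, real_inner_self_eq_norm_sq, hφ1, horth, one_pow]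
  have hdefect : inner ℝ φ (R (flipOp ι (rotOp K u ψ - e • ψ))) ≤ ρ / r := by
    refine (real_inner_le_norm _ _).trans ?_
    rw [hφ1, one_mul]
    refine (h.norm_resolvent_le _).trans ?_
    rw [norm_flipOp]
    gcongr
    simpa [hψ1] using h.isAlmostEigenspace ψ hψ
  have hcomm : ∑ x, inner ℝ φ (R (siteCommutator x ψ)) ≤
      Fintype.card ι * (2 * Fintype.card ι * κ' + 5 * √κ / r) := by
    refine (Finset.sum_le_sum fun x _ => inner_flipOp_resolvent_siteCommutator_le h hr hκ
      (by simpa [hψ1] using hq x ψ hψ) hψ1 fun y => (hlt y x).le).trans ?_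
    rw [Finset.sum_const, Finset.card_univ, nsmul_eq_mul]
  rw [hφ, rotOp_flipOp_sub, map_add, inner_add_right, map_sum, inner_sum, ← hφ] at hinv
  linarith

end SecondOrderForms

section UnstableClusters

variable {ι : Type*} [Fintype ι] [DecidableEq ι] {K : Matrix ι ι ℝ} {ε ρ r κ κ' θ : ℝ}

lemma norm_rotOp_sub_sub_smul_siteOp_le {u u' : ι → ℝ} {x : ι} (hρ : 0 ≤ ρ)
    (hu : ∀ z, z ≠ x → |u' z - u z| ≤ ρ / (Fintype.card ι + 1))
    (v : EuclideanSpace ℝ (ι × Bool)) :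
    ‖rotOp K u' v - rotOp K u v - (u' x - u x) • siteOp x v‖ ≤ ρ * ‖v‖ := by
  have hsum : rotOp K u' v - rotOp K u v - (u' x - u x) • siteOp x v =
      ∑ z ∈ Finset.univ.erase x, (u' z - u z) • siteOp z v := by
    rw [rotOp_eq_add_sum K u u', ← Finset.add_sum_erase _ _ (Finset.mem_univ x)]
    abel
  have hcard : ((Finset.univ.erase x).card : ℝ) ≤ Fintype.card ι + 1 := by
    have := Finset.card_le_univ (Finset.univ.erase x)
    norm_cast
    omega
  rw [hsum]
  calc ‖∑ z ∈ Finset.univ.erase x, (u' z - u z) • siteOp z v‖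
      ≤ ∑ _z ∈ Finset.univ.erase x, ρ / (Fintype.card ι + 1) * ‖v‖ := by
        refine norm_sum_le_of_le _ fun z hz => ?_
        rw [norm_smul, Real.norm_eq_abs]
        gcongr
        exacts [hu z (Finset.ne_of_mem_erase hz), norm_siteOp_le z v]
    _ ≤ (Fintype.card ι + 1) * (ρ / (Fintype.card ι + 1) * ‖v‖) := by
        rw [Finset.sum_const, nsmul_eq_mul]
        gcongr
    _ = ρ * ‖v‖ := by field_simp

/-- The potentials for which some spectral cluster with energy `e` reacts to first order to a
change of the potential at `x`. -/
def firstOrderSet (K : Matrix ι ι ℝ) (ρ r κ : ℝ) (N : ℕ) (x : ι) (e : ℝ) : Set (ι → ℝ) :=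
  {u | ∃ (W : Submodule ℝ (EuclideanSpace ℝ (ι × Bool))) (R : Module.End ℝ _),
    Module.finrank ℝ W = N ∧ IsSpectralCluster (rotOp K u) e W R ρ r ∧
    ∃ ψ ∈ W, ∃ ψ' ∈ W, inner ℝ ψ' ψ = 0 ∧ κ * (‖ψ'‖ * ‖ψ‖) < |inner ℝ ψ' (siteOp x ψ)|}

/-- The potentials for which some spectral cluster with energy `e` does not react to first order to
a change of the potential at `p.1`, but starts to do so when the potential at `p.2` is changed. -/
def secondOrderSet (K : Matrix ι ι ℝ) (ρ r κ κ' : ℝ) (N : ℕ) (p : ι × ι) (e : ℝ) :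
    Set (ι → ℝ) :=
  {u | ∃ (W : Submodule ℝ (EuclideanSpace ℝ (ι × Bool))) (R : Module.End ℝ _),
    Module.finrank ℝ W = N ∧ IsSpectralCluster (rotOp K u) e W R ρ r ∧
    (∀ v ∈ W, |inner ℝ v (siteOp p.1 v)| ≤ 3 * κ * ‖v‖ ^ 2) ∧
    ∃ ψ ∈ W, ‖ψ‖ = 1 ∧ κ' ≤ |inner ℝ (siteOp p.1 ψ) (R (siteOp p.2 ψ))|}

lemma unifPi_firstOrderSet_Icc_le (hK : K.IsSymm) (hρ : 0 < ρ) (hr : 0 < r) (hr1 : r ≤ 1)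
    (hκ : 0 < κ) (hκ1 : κ ≤ 1) (hρκ : ρ ≤ κ * r / 32) (hθ : θ ≤ r / 2) (N : ℕ) (x : ι) (a : ℝ) :
    unifPi ι {u | ∃ e ∈ Set.Icc a (a + θ), u ∈ firstOrderSet K ρ r κ N x e} ≤
      ENNReal.ofReal (576 * ρ / (κ ^ 2 * r)) := by
  have hκr : κ * r ≤ 1 := mul_le_one₀ hκ1 hr.le hr1
  rw [show 576 * ρ / (κ ^ 2 * r) = 3 * (12 * ρ / κ) / (κ * r / 16) by field_simp; norm_num]
  refine unifPi_le_of_isolated (x := x) (ς := ρ / (Fintype.card ι + 1)) (by positivity)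
    (by positivity) (by linarith) (by positivity) ?_
  rintro u ⟨e, he, W, R, hN, hW, ψ, hψ, ψ', hψ', horth, hform⟩ u' ⟨e', he', W', R', hN', hW', -⟩
    hz hx
  refine hW.abs_le_of_lt_inner hW'.isAlmostEigenspace hr
    (norm_rotOp_sub_sub_smul_siteOp_le hρ.le hz) (norm_siteOp_le x)
    ((Real.dist_le_of_mem_Icc he' he).trans (by linarith)) hρ.le
    (rotOp_isSymmetric hK u) (hN.trans hN'.symm) hκ hκ1 (by linarith) hψ hψ' horth hform

lemma unifPi_secondOrderSet_Icc_le (hρ : 0 < ρ) (hr : 0 < r) (hr1 : r ≤ 1) (hκ : 0 ≤ κ)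
    (hκ' : 0 < κ') (hκ1 : κ' ≤ 1) (hρκ : ρ ≤ κ * r / 8) (hθ : θ ≤ κ' * r ^ 2 / 32) (N : ℕ)
    (p : ι × ι) (a : ℝ) :
    unifPi ι {u | ∃ e ∈ Set.Icc a (a + θ), u ∈ secondOrderSet K ρ r κ κ' N p e} ≤
      ENNReal.ofReal (7680 * κ / (κ' ^ 2 * r ^ 2)) := by
  have hκr : κ' * r ^ 2 ≤ 1 := mul_le_one₀ hκ1 (by positivity) (pow_le_one₀ hr.le hr1)
  rw [show 7680 * κ / (κ' ^ 2 * r ^ 2) = 3 * (16 * κ / κ') / (κ' * r ^ 2 / 160) by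
    field_simp; ring]
  refine unifPi_le_of_isolated (x := p.2) (ς := ρ / (Fintype.card ι + 1)) (by positivity)
    (by positivity) (by linarith) (by positivity) ?_
  rintro u ⟨e, he, W, R, hN, hW, hq, ψ, hψ, hψ1, hform⟩ u' ⟨e', he', W', R', hN', hW', hq', -⟩
    hz hx
  exact hW.abs_le_of_le_inner hW'.isAlmostEigenspace hr hr1
    (norm_rotOp_sub_sub_smul_siteOp_le hρ.le hz) (norm_siteOp_le p.2)
    ((Real.dist_le_of_mem_Icc he' he).trans (by linarith)) hρ.le
    (hN.trans hN'.symm) (siteOp_isSymmetric p.1) (norm_siteOp_le p.1) hκ hκ' hκ1 hx hρκ hq hq' hψ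
    hψ1 hform

lemma measure_exists_energy_le {Ω β : Type*} [MeasurableSpace Ω] [Fintype β] (μ : Measure Ω)
    (S : β → ℝ → Set Ω) {p : ℝ} (hε : 0 < ε) (hθ : 0 < θ) (hεθ : ε * θ ≤ 1)
    (hp : ∀ i a, μ {ω | ∃ e ∈ Set.Icc a (a + θ), ω ∈ S i e} ≤ ENNReal.ofReal p) :
    μ {ω | ∃ i e, |e| ≤ 3 / ε ∧ ω ∈ S i e} ≤
      ENNReal.ofReal (Fintype.card β * (7 / (ε * θ) * p)) := by
  have hgrid : ((⌊2 * (3 / ε) / θ⌋₊ + 1 : ℕ) : ℝ) ≤ 7 / (ε * θ) := by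
    have hfloor := Nat.floor_le (show 0 ≤ 2 * (3 / ε) / θ by positivity)
    have hone : 1 ≤ 1 / (ε * θ) := (one_le_div (by positivity)).2 hεθ
    push_cast
    calc (⌊2 * (3 / ε) / θ⌋₊ : ℝ) + 1 ≤ 2 * (3 / ε) / θ + 1 / (ε * θ) := add_le_add hfloor hone
      _ = 7 / (ε * θ) := by field_simp; norm_num
  have hunion : {ω | ∃ i e, |e| ≤ 3 / ε ∧ ω ∈ S i e} = ⋃ i, {ω | ∃ e, |e| ≤ 3 / ε ∧ ω ∈ S i e} := by
    ext
    simp only [Set.mem_iUnion, Set.mem_ofPred_eq]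
  have hsite : ∀ i, μ {ω | ∃ e, |e| ≤ 3 / ε ∧ ω ∈ S i e} ≤ ENNReal.ofReal (7 / (ε * θ) * p) :=
    fun i => by
      refine (measure_exists_abs_le_le μ (S i) hθ _ (hp i)).trans ?_
      rw [ENNReal.ofReal_mul (by positivity), ← ENNReal.ofReal_natCast]
      gcongr
  calc μ {ω | ∃ i e, |e| ≤ 3 / ε ∧ ω ∈ S i e}
      ≤ ∑ _i : β, ENNReal.ofReal (7 / (ε * θ) * p) := by
        rw [hunion]
        exact (measure_iUnion_fintype_le _ _).trans (Finset.sum_le_sum fun i _ => hsite i)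
    _ = ENNReal.ofReal (Fintype.card β * (7 / (ε * θ) * p)) := by
        rw [Finset.sum_const, Finset.card_univ, nsmul_eq_mul, ← ENNReal.ofReal_natCast,
          ← ENNReal.ofReal_mul (by positivity)]

lemma pow_twelve_le_mul_div (hε : 0 < ε) (hε1 : ε ≤ 1 / 10 ^ 6) (hr : 0 < r) (hrε : r ≤ ε ^ 53) :
    r ^ 12 ≤ r ^ 4 * ε ^ 20 * r / 32 := by
  have hε2 : ε ≤ 1 := hε1.trans (by norm_num)
  have hr1 : r ≤ 1 := hrε.trans (pow_le_one₀ hε.le hε2)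
  have hpow : r ^ 7 ≤ ε ^ 20 / 32 := by
    calc r ^ 7 ≤ ε ^ 53 := (pow_le_of_le_one hr.le hr1 (by norm_num)).trans hrε
      _ ≤ ε ^ 21 := pow_le_pow_of_le_one hε.le hε2 (by norm_num)
      _ = ε ^ 20 * ε := pow_succ _ _
      _ ≤ ε ^ 20 * (1 / 32) := by gcongr; linarith
      _ = ε ^ 20 / 32 := by ring
  calc r ^ 12 = r ^ 5 * r ^ 7 := by ring
    _ ≤ r ^ 5 * (ε ^ 20 / 32) := by gcongr
    _ = r ^ 4 * ε ^ 20 * r / 32 := by ring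

lemma unifPi_exists_mem_firstOrderSet_le (hK : K.IsSymm) (hε : 0 < ε) (hε1 : ε ≤ 1 / 10 ^ 6)
    (hV : Fintype.card ι * ε ≤ 1) (hr : 0 < r) (hrε : r ≤ ε ^ 53) (N : ℕ) :
    unifPi ι {u | ∃ x e, |e| ≤ 3 / ε ∧ u ∈ firstOrderSet K (r ^ 12) r (r ^ 4 * ε ^ 20) N x e} ≤
      ENNReal.ofReal (ε ^ 6) := by
  have hε2 : ε ≤ 1 := hε1.trans (by norm_num)
  have hr1 : r ≤ 1 := hrε.trans (pow_le_one₀ hε.le hε2)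
  have hθ : r ^ 2 * ε ^ 4 ≤ r / 2 := by
    calc r ^ 2 * ε ^ 4 ≤ r ^ 1 * ε ^ 1 := mul_le_mul
          (pow_le_pow_of_le_one hr.le hr1 one_le_two)
          (pow_le_pow_of_le_one hε.le hε2 (by norm_num)) (by positivity) (by positivity)
      _ ≤ r ^ 1 * (1 / 2) := by gcongr; linarith
      _ = r / 2 := by ring
  have hp := fun x a => unifPi_firstOrderSet_Icc_le hK (by positivity) hr hr1 (by positivity)
    (mul_le_one₀ (pow_le_one₀ hr.le hr1) (by positivity) (pow_le_one₀ hε.le hε2))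
    (pow_twelve_le_mul_div hε hε1 hr hrε) hθ N x a
  refine (measure_exists_energy_le _ _ hε (by positivity) ?_ hp).trans
    (ENNReal.ofReal_le_ofReal ?_)
  · exact mul_le_one₀ hε2 (by positivity)
      (mul_le_one₀ (pow_le_one₀ hr.le hr1) (by positivity) (pow_le_one₀ hε.le hε2))
  · calc (Fintype.card ι : ℝ) * (7 / (ε * (r ^ 2 * ε ^ 4)) *
          (576 * r ^ 12 / ((r ^ 4 * ε ^ 20) ^ 2 * r)))
        = (Fintype.card ι * ε) * (4032 * r / ε ^ 46) := by field_simp; ring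
      _ ≤ 1 * (4032 * ε ^ 53 / ε ^ 46) := by gcongr
      _ = 4032 * ε * ε ^ 6 := by field_simp
      _ ≤ 1 * ε ^ 6 := by gcongr; linarith
      _ = ε ^ 6 := one_mul _

lemma unifPi_exists_mem_secondOrderSet_le (hε : 0 < ε) (hε1 : ε ≤ 1 / 10 ^ 6)
    (hV : Fintype.card ι * ε ≤ 1) (hr : 0 < r) (hrε : r ≤ ε ^ 53) (N : ℕ) :
    unifPi ι {u | ∃ p e, |e| ≤ 3 / ε ∧
        u ∈ secondOrderSet K (r ^ 12) r (r ^ 4 * ε ^ 20) (ε ^ 3) N p e} ≤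
      ENNReal.ofReal (ε ^ 6) := by
  have hε2 : ε ≤ 1 := hε1.trans (by norm_num)
  have hr1 : r ≤ 1 := hrε.trans (pow_le_one₀ hε.le hε2)
  have hθ : r ^ 2 * ε ^ 4 ≤ ε ^ 3 * r ^ 2 / 32 := by
    calc r ^ 2 * ε ^ 4 = ε ^ 3 * r ^ 2 * ε := by ring
      _ ≤ ε ^ 3 * r ^ 2 * (1 / 32) := by gcongr; linarith
      _ = ε ^ 3 * r ^ 2 / 32 := by ring
  have hρκ : r ^ 12 ≤ r ^ 4 * ε ^ 20 * r / 8 :=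
    (pow_twelve_le_mul_div hε hε1 hr hrε).trans (by gcongr; norm_num)
  have hp := fun p a => unifPi_secondOrderSet_Icc_le (K := K) (by positivity) hr hr1
    (by positivity) (by positivity) (pow_le_one₀ hε.le hε2) hρκ hθ N p a
  refine (measure_exists_energy_le _ _ hε (by positivity) ?_ hp).trans
    (ENNReal.ofReal_le_ofReal ?_)
  · exact mul_le_one₀ hε2 (by positivity)
      (mul_le_one₀ (pow_le_one₀ hr.le hr1) (by positivity) (pow_le_one₀ hε.le hε2))
  · calc (Fintype.card (ι × ι) : ℝ) * (7 / (ε * (r ^ 2 * ε ^ 4)) *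
          (7680 * (r ^ 4 * ε ^ 20) / ((ε ^ 3) ^ 2 * r ^ 2)))
        = (Fintype.card ι * ε) ^ 2 * (53760 * ε * ε ^ 6) := by
          rw [Fintype.card_prod, Nat.cast_mul]
          field_simp
          ring
      _ ≤ 1 ^ 2 * (1 * ε ^ 6) := by gcongr; linarith
      _ = ε ^ 6 := by ring

end UnstableClusters

section SpectralSubspaces

variable {E n : Type*} [NormedAddCommGroup E] [InnerProductSpace ℝ E] [Fintype n]
  {b : OrthonormalBasis n ℝ E} {T : E →ₗ[ℝ] E} {lam : n → ℝ} {e ρ r C : ℝ} {I : Finset n} {v : E}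

lemma inner_apply_of_eigenbasis (hT : ∀ i, T (b i) = lam i • b i) (v : E) (i : n) :
    inner ℝ (b i) (T v) = lam i * inner ℝ (b i) v := by
  classical
  rw [← b.sum_repr' v, map_sum, inner_sum, inner_sum, Finset.mul_sum]
  refine Finset.sum_congr rfl fun j _ => ?_
  rw [map_smul, hT, inner_smul_right, inner_smul_right, inner_smul_right]
  rcases eq_or_ne i j with rfl | hij
  · ring
  · rw [b.inner_eq_zero hij]
    ring

lemma eq_of_forall_inner_eq {w : E} (h : ∀ i, inner ℝ (b i) v = inner ℝ (b i) w) : v = w := by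
  rw [← b.sum_repr' v, ← b.sum_repr' w]
  simp only [h]

lemma norm_apply_le_of_eigenbasis (hT : ∀ i, T (b i) = lam i • b i) (hC : 0 ≤ C)
    (hlam : ∀ i, inner ℝ (b i) v ≠ 0 → |lam i| ≤ C) : ‖T v‖ ≤ C * ‖v‖ := by
  rw [← sq_le_sq₀ (norm_nonneg _) (by positivity), mul_pow, ← b.sum_sq_norm_inner_right,
    ← b.sum_sq_norm_inner_right, Finset.mul_sum]
  refine Finset.sum_le_sum fun i _ => ?_
  rw [inner_apply_of_eigenbasis hT, norm_mul, mul_pow, Real.norm_eq_abs]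
  rcases eq_or_ne (inner ℝ (b i) v) 0 with hi | hi
  · simp [hi]
  · gcongr
    exact hlam i hi

/-- The span of the members of an orthonormal basis with indices in `I`. -/
def spectralSubspace (b : OrthonormalBasis n ℝ E) (I : Finset n) : Submodule ℝ E :=
  Submodule.span ℝ (Set.range (b ∘ ((↑) : I → n)))

lemma finrank_spectralSubspace (b : OrthonormalBasis n ℝ E) (I : Finset n) :
    Module.finrank ℝ (spectralSubspace b I) = I.card := by
  rw [spectralSubspace,
    finrank_span_eq_card (b.orthonormal.comp _ Subtype.val_injective).linearIndependent,
    Fintype.card_coe]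

lemma mem_spectralSubspace_iff : v ∈ spectralSubspace b I ↔ ∀ i ∉ I, inner ℝ (b i) v = 0 := by
  classical
  constructor
  · intro hv i hi
    suffices hle : spectralSubspace b I ≤ LinearMap.ker (innerₛₗ ℝ (b i)) from hle hv
    rw [spectralSubspace, Submodule.span_le]
    rintro _ ⟨j, rfl⟩
    exact b.inner_eq_zero fun hij : i = j => hi (hij ▸ j.2)
  · intro hv
    rw [← b.sum_repr' v]
    refine Submodule.sum_mem _ fun i _ => ?_
    by_cases hi : i ∈ I
    · exact Submodule.smul_mem _ _ (Submodule.subset_span ⟨⟨i, hi⟩, rfl⟩)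
    · rw [hv i hi, zero_smul]
      exact Submodule.zero_mem _

lemma isAlmostEigenspace_spectralSubspace (hT : ∀ i, T (b i) = lam i • b i) (hρ : 0 ≤ ρ)
    (hI : ∀ i ∈ I, |lam i - e| ≤ ρ) : IsAlmostEigenspace T e ρ (spectralSubspace b I) := by
  intro v hv
  refine norm_apply_le_of_eigenbasis (b := b) (T := T - e • 1) (lam := fun i => lam i - e)
    (fun i => ?_) hρ fun i hi => hI i (by_contra fun h => hi (mem_spectralSubspace_iff.1 hv i h))
  rw [LinearMap.sub_apply, LinearMap.smul_apply, Module.End.one_apply, hT, sub_smul]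

variable [FiniteDimensional ℝ E]

lemma inner_starProjection_spectralSubspace [DecidableEq n] (b : OrthonormalBasis n ℝ E)
    (I : Finset n) (v : E) (i : n) :
    inner ℝ (b i) ((spectralSubspace b I).starProjection v) =
      (if i ∈ I then 1 else 0) * inner ℝ (b i) v := by
  let P := b.toBasis.constr ℝ fun i => (if i ∈ I then 1 else 0 : ℝ) • b i
  have hP : ∀ v i, inner ℝ (b i) (P v) = (if i ∈ I then 1 else 0) * inner ℝ (b i) v :=
    inner_apply_of_eigenbasis fun i => by
      rw [← b.coe_toBasis, Module.Basis.constr_basis, b.coe_toBasis]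
  rw [Submodule.eq_starProjection_of_mem_orthogonal (v := P v), hP]
  · rw [mem_spectralSubspace_iff]
    intro j hj
    rw [hP, if_neg hj, zero_mul]
  · rw [Submodule.mem_orthogonal]
    intro w hw
    rw [← b.sum_inner_mul_inner]
    refine Finset.sum_eq_zero fun j _ => ?_
    by_cases hj : j ∈ I
    · rw [inner_sub_right, hP, if_pos hj, one_mul, sub_self, mul_zero]
    · rw [real_inner_comm, mem_spectralSubspace_iff.1 hw j hj, zero_mul]

lemma exists_isSpectralCluster_spectralSubspace (hT : ∀ i, T (b i) = lam i • b i) (hρ : 0 ≤ ρ)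
    (hr : 0 < r) (hI : ∀ i ∈ I, |lam i - e| ≤ ρ) (hI' : ∀ i ∉ I, r ≤ |lam i - e|) :
    ∃ R, IsSpectralCluster T e (spectralSubspace b I) R ρ r := by
  classical
  let c : n → ℝ := fun i => if i ∈ I then 0 else (lam i - e)⁻¹
  let R := b.toBasis.constr ℝ fun i => c i • b i
  have hRb : ∀ i, R (b i) = c i • b i := fun i => by
    rw [← b.coe_toBasis, Module.Basis.constr_basis, b.coe_toBasis]
  have hR := inner_apply_of_eigenbasis hRb
  refine ⟨R, isAlmostEigenspace_spectralSubspace hT hρ hI, fun v => ?_, fun v => ?_, fun v hv => ?_⟩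
  · refine eq_of_forall_inner_eq (b := b) fun i => ?_
    rw [hR, inner_sub_right, inner_sub_right, inner_smul_right, inner_apply_of_eigenbasis hT,
      inner_starProjection_spectralSubspace]
    by_cases hi : i ∈ I
    · simp [c, hi]
    · have hne : lam i - e ≠ 0 := abs_pos.1 (hr.trans_le (hI' i hi))
      simp only [c, if_neg hi]
      field_simp
      ring
  · rw [div_eq_inv_mul]
    refine norm_apply_le_of_eigenbasis hRb (by positivity) fun i _ => ?_
    by_cases hi : i ∈ I
    · simp [c, hi, hr.le]
    · rw [show c i = (lam i - e)⁻¹ from if_neg hi, abs_inv]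
      exact inv_anti₀ hr (hI' i hi)
  · refine eq_of_forall_inner_eq (b := b) fun i => ?_
    rw [hR, inner_zero_right]
    by_cases hi : i ∈ I
    · rw [show c i = 0 from if_pos hi, zero_mul]
    · rw [mem_spectralSubspace_iff.1 hv i hi, mul_zero]

end SpectralSubspaces

section ClusterSelection

variable {ι n : Type*} [Fintype ι] [DecidableEq ι] [Fintype n] {K : Matrix ι ι ℝ} {u : ι → ℝ}
  {ε e ρ r : ℝ} {b : OrthonormalBasis n ℝ (EuclideanSpace ℝ (ι × Bool))} {lam : n → ℝ}

omit [Fintype ι] in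
lemma sum_abs_rotHam_le (hK : ∀ x y, |K x y| ≤ 1) (hu : ∀ x, |u x| ≤ 1) (z y : ι) (a : Bool) :
    ∑ c, |rotHam K u (z, a) (y, c)| ≤ 1 + if z = y then 2 else 0 := by
  rw [Fintype.sum_bool]
  rcases eq_or_ne z y with rfl | hzy
  · cases a <;> simp [rotHam] <;>
      linarith [abs_add_le (K z z) 1, abs_add_le (K z z) (-1), hK z z, hu z, abs_neg (1 : ℝ),
        abs_one (α := ℝ)]
  · cases a <;> simpa [rotHam, hzy] using hK z y

lemma abs_eigenvalue_rotOp_le (hK : ∀ x y, |K x y| ≤ 1) (hu : ∀ x, |u x| ≤ 1)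
    {v : EuclideanSpace ℝ (ι × Bool)} (hv : v ≠ 0) (h : rotOp K u v = e • v) :
    |e| ≤ 3 * Fintype.card ι := by
  have heig : Module.End.HasEigenvalue (toLin' (rotHam K u)) e :=
    Module.End.hasEigenvalue_of_hasEigenvector (x := v.ofLp)
      ⟨Module.End.mem_eigenspace_iff.2 (congrArg WithLp.ofLp h), by simpa using hv⟩
  obtain ⟨⟨z, a⟩, hball⟩ := eigenvalue_mem_ball heig
  have hsite : (1 : ℝ) ≤ Fintype.card ι := by exact_mod_cast Fintype.card_pos_iff.2 ⟨z⟩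
  calc |e| ≤ |rotHam K u (z, a) (z, a)| +
        ∑ s ∈ Finset.univ.erase (z, a), |rotHam K u (z, a) s| := by
        rw [mem_closedBall_iff_norm, Real.norm_eq_abs] at hball
        simpa using (abs_sub_abs_le_abs_sub _ _).trans hball |> sub_le_iff_le_add'.1
    _ = ∑ y, ∑ c, |rotHam K u (z, a) (y, c)| := by
        rw [Finset.add_sum_erase _ (fun s => |rotHam K u (z, a) s|) (Finset.mem_univ _),
          Fintype.sum_prod_type]
    _ ≤ ∑ y, (1 + if z = y then 2 else 0) :=
        Finset.sum_le_sum fun y _ => sum_abs_rotHam_le hK hu z y a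
    _ ≤ 3 * Fintype.card ι := by
        rw [Finset.sum_add_distrib, Finset.sum_ite_eq, if_pos (Finset.mem_univ _)]
        simp only [Finset.sum_const, Finset.card_univ, nsmul_eq_mul, mul_one]
        linarith

/-- The indices of the eigenvalues within distance `w` of the energy `e`. -/
noncomputable def eigenWindow (lam : n → ℝ) (e w : ℝ) : Finset n := {i | |lam i - e| ≤ w}

/-- The exponents of the energy scales `gapScale ε i`: each scale is the twelfth power of the
previous one. -/
def gapExponent (i : ℕ) : ℕ := 500 * 12 ^ i

lemma gapExponent_pos (i : ℕ) : 0 < gapExponent i := by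
  unfold gapExponent
  positivity

lemma gapExponent_mono : Monotone gapExponent := fun i j hij => by
  unfold gapExponent
  gcongr
  norm_num

/-- The decreasing sequence of energy scales among which a spectral gap is found. -/
noncomputable def gapScale (ε : ℝ) (i : ℕ) : ℝ := ε ^ gapExponent i

lemma gapScale_succ (ε : ℝ) (i : ℕ) : gapScale ε (i + 1) = gapScale ε i ^ 12 := by
  rw [gapScale, gapScale, ← pow_mul, gapExponent, gapExponent, mul_assoc, ← pow_succ]

lemma gapScale_antitone (hε : 0 ≤ ε) (hε1 : ε ≤ 1) : Antitone (gapScale ε) := fun _ _ hij =>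
  pow_le_pow_of_le_one hε hε1 (gapExponent_mono hij)

lemma gapScale_zero_le (hε : 0 ≤ ε) (hε1 : ε ≤ 1 / 2) : gapScale ε 0 ≤ ε ^ 488 / 2 := by
  calc
    gapScale ε 0 = ε ^ 488 * ε ^ 12 := by rw [gapScale, ← pow_add ε 488 12]; rfl
    _ ≤ ε ^ 488 * (1 / 2) := by
      gcongr
      exact (pow_le_of_le_one hε (by linarith) (by norm_num)).trans hε1
    _ = ε ^ 488 / 2 := by ring

lemma card_eigenWindow_lt (hT : ∀ i, rotOp K u (b i) = lam i • b i) (hu : u ∉ crowdedSet K ε)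
    (he : |e| ≤ 3 / ε) (hε : 0 ≤ ε) (hr : r ≤ ε ^ 488 / 2) : (eigenWindow lam e r).card < 40 := by
  by_contra! hcard
  refine hu ⟨e, he, spectralSubspace b (eigenWindow lam e r), ?_, ?_⟩
  · rwa [finrank_spectralSubspace]
  · exact isAlmostEigenspace_spectralSubspace hT (div_nonneg (pow_nonneg hε 488) zero_le_two)
      fun i hi => ((Finset.mem_filter_univ i).1 hi).trans hr

lemma exists_succ_eq_of_antitone {f : ℕ → ℕ} (hf : Antitone f) {N : ℕ} (h : f 0 < f N + N) :
    ∃ i < N, f (i + 1) = f i := by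
  by_contra! hne
  have hdrop : ∀ i ≤ N, f i + i ≤ f 0 := fun i => by
    induction i with
    | zero => simp
    | succ i ih =>
      intro hi
      have := ih (by omega)
      have := hne i (by omega)
      have : f (i + 1) ≤ f i := hf i.le_succ
      omega
  exact absurd (hdrop N le_rfl) (by omega)

/- Between two and forty eigenvalues lie in each of the nested windows around `lam α`, so two
consecutive windows among the `39` contain the same eigenvalues. -/
lemma exists_isSpectralCluster (hK : ∀ x y, |K x y| ≤ 1) (hε : 0 < ε) (hε1 : ε ≤ 1 / 2)
    (hV : Fintype.card ι * ε ≤ 1) (hu1 : ∀ x, |u x| ≤ 1) (hu : u ∉ crowdedSet K ε)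
    (hT : ∀ i, rotOp K u (b i) = lam i • b i) {α β : n} (hαβ : α ≠ β)
    (hgap : |lam α - lam β| ≤ gapScale ε 38) :
    ∃ i < 38, ∃ (e : ℝ) (W : Submodule ℝ (EuclideanSpace ℝ (ι × Bool))) (R : Module.End ℝ _),
      |e| ≤ 3 / ε ∧ 2 ≤ Module.finrank ℝ W ∧ Module.finrank ℝ W < 40 ∧
        IsSpectralCluster (rotOp K u) e W R (gapScale ε (i + 1)) (gapScale ε i) := by
  classical
  have hpos : ∀ i, 0 < gapScale ε i := fun i => pow_pos hε _
  have he : |lam α| ≤ 3 / ε := by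
    refine (abs_eigenvalue_rotOp_le hK hu1 (b.orthonormal.ne_zero α) (hT α)).trans ?_
    rw [le_div_iff₀ hε]
    linarith
  set I : ℕ → Finset n := fun i => eigenWindow lam (lam α) (gapScale ε i)
  have hmem : ∀ i k, k ∈ I i ↔ |lam k - lam α| ≤ gapScale ε i := fun i => Finset.mem_filter_univ
  have hanti : Antitone I := fun i j hij k hk =>
    (hmem i k).2 (((hmem j k).1 hk).trans (gapScale_antitone hε.le (by linarith) hij))
  have hpair : ∀ i ≤ 38, 2 ≤ (I i).card := fun i hi => by
    rw [← Finset.card_pair hαβ]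
    refine Finset.card_le_card (Finset.Subset.trans ?_ (hanti hi))
    rw [Finset.insert_subset_iff, Finset.singleton_subset_iff, hmem, hmem, sub_self, abs_zero,
      abs_sub_comm]
    exact ⟨(hpos 38).le, hgap⟩
  have hlt : ∀ i, (I i).card < 40 := fun i => card_eigenWindow_lt hT hu he hε.le
    ((gapScale_antitone hε.le (by linarith) i.zero_le).trans (gapScale_zero_le hε.le hε1))
  obtain ⟨i, hi, hcard⟩ := exists_succ_eq_of_antitone (f := fun i => (I i).card) (N := 38)
    (fun i j hij => Finset.card_le_card (hanti hij)) (by linarith [hlt 0, hpair 38 le_rfl])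
  have hEq : I (i + 1) = I i := Finset.eq_of_subset_of_card_le (hanti i.le_succ) hcard.ge
  obtain ⟨R, hR⟩ := exists_isSpectralCluster_spectralSubspace hT (hpos (i + 1)).le (hpos i)
    (I := I (i + 1)) (fun k hk => (hmem _ k).1 hk) fun k hk => by
      rw [hEq, hmem] at hk
      exact (not_le.1 hk).le
  exact ⟨i, hi, lam α, _, R, he, by rw [finrank_spectralSubspace]; exact hpair _ (by omega),
    by rw [finrank_spectralSubspace]; exact hlt _, hR⟩

end ClusterSelection

section LevelSpacing

variable {ι n : Type*} [Fintype ι] [DecidableEq ι] [Fintype n] {K : Matrix ι ι ℝ} {u : ι → ℝ}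
  {ε e r : ℝ}

lemma second_order_defect_lt_one (hε : 0 < ε) (hε1 : ε ≤ 1 / 10 ^ 6) {V : ℝ} (hV0 : 0 ≤ V)
    (hV : V * ε ≤ 1) (hr : 0 < r) (hrε : r ≤ ε) :
    V * (3 * (r ^ 4 * ε ^ 20)) + r ^ 12 / r +
      V * (2 * V * ε ^ 3 + 5 * √(r ^ 4 * ε ^ 20) / r) < 1 := by
  have hε2 : ε ≤ 1 := hε1.trans (by norm_num)
  have hr1 : r ≤ 1 := hrε.trans hε2
  have hVε0 : 0 ≤ V * ε := by positivity
  have hfirst : V * (3 * (r ^ 4 * ε ^ 20)) ≤ 3 * ε := by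
    calc V * (3 * (r ^ 4 * ε ^ 20)) = 3 * (V * ε) * (r ^ 4 * (ε ^ 18 * ε)) := by ring
      _ ≤ 3 * 1 * (1 * (1 * ε)) := by
        gcongr
        exacts [pow_le_one₀ hr.le hr1, pow_le_one₀ hε.le hε2]
      _ = 3 * ε := by ring
  have hresidual : r ^ 12 / r ≤ ε := by
    rw [div_le_iff₀ hr]
    calc r ^ 12 = r ^ 10 * r * r := by ring
      _ ≤ 1 * ε * r := by
        gcongr
        exact pow_le_one₀ hr.le hr1
      _ = ε * r := by ring
  have hcoupling : V * (2 * V * ε ^ 3) ≤ 2 * ε := by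
    calc V * (2 * V * ε ^ 3) = 2 * (V * ε) ^ 2 * ε := by ring
      _ ≤ 2 * 1 * ε := by
        gcongr
        exact pow_le_one₀ hVε0 hV
      _ = 2 * ε := by ring
  have hsqrt : V * (5 * √(r ^ 4 * ε ^ 20) / r) ≤ 5 * ε := by
    rw [show r ^ 4 * ε ^ 20 = (r ^ 2 * ε ^ 10) ^ 2 by ring, Real.sqrt_sq (by positivity)]
    calc V * (5 * (r ^ 2 * ε ^ 10) / r) = 5 * (V * ε) * (r * (ε ^ 8 * ε)) := by
          field_simp
      _ ≤ 5 * 1 * (1 * (1 * ε)) := by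
        gcongr
        exact pow_le_one₀ hε.le hε2
      _ = 5 * ε := by ring
  linarith

/-- The potentials for which an `N`-dimensional spectral cluster within the energy range of the
operator can be moved by changing the potential at one site. The exponents are those at
which moving a cluster is unlikely while every cluster of at least two levels can be moved. -/
def movableSet (K : Matrix ι ι ℝ) (ε r : ℝ) (N : ℕ) : Set (ι → ℝ) :=
  {u | ∃ x e, |e| ≤ 3 / ε ∧ u ∈ firstOrderSet K (r ^ 12) r (r ^ 4 * ε ^ 20) N x e} ∪
    {u | ∃ p e, |e| ≤ 3 / ε ∧ u ∈ secondOrderSet K (r ^ 12) r (r ^ 4 * ε ^ 20) (ε ^ 3) N p e}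

lemma unifPi_movableSet_le (hK : K.IsSymm) (hε : 0 < ε) (hε1 : ε ≤ 1 / 10 ^ 6)
    (hV : Fintype.card ι * ε ≤ 1) (hr : 0 < r) (hrε : r ≤ ε ^ 53) (N : ℕ) :
    unifPi ι (movableSet K ε r N) ≤ ENNReal.ofReal (2 * ε ^ 6) := by
  rw [two_mul, ENNReal.ofReal_add (by positivity) (by positivity)]
  exact (measure_union_le _ _).trans
    (add_le_add (unifPi_exists_mem_firstOrderSet_le hK hε hε1 hV hr hrε N)
      (unifPi_exists_mem_secondOrderSet_le hε hε1 hV hr hrε N))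

lemma IsSpectralCluster.mem_movableSet {W : Submodule ℝ (EuclideanSpace ℝ (ι × Bool))}
    {R : Module.End ℝ (EuclideanSpace ℝ (ι × Bool))}
    (h : IsSpectralCluster (rotOp K u) e W R (r ^ 12) r) (he : |e| ≤ 3 / ε) (hε : 0 < ε)
    (hε1 : ε ≤ 1 / 10 ^ 6) (hV : Fintype.card ι * ε ≤ 1) (hr : 0 < r) (hrε : r ≤ ε)
    (hW : 2 ≤ Module.finrank ℝ W) : u ∈ movableSet K ε r (Module.finrank ℝ W) := by
  by_cases hfirst : ∃ x, ∃ ψ ∈ W, ∃ ψ' ∈ W, inner ℝ ψ' ψ = 0 ∧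
      r ^ 4 * ε ^ 20 * (‖ψ'‖ * ‖ψ‖) < |inner ℝ ψ' (siteOp x ψ)|
  · obtain ⟨x, hx⟩ := hfirst
    exact .inl ⟨x, e, he, W, R, rfl, h, hx⟩
  · push Not at hfirst
    have hq : ∀ x, ∀ v ∈ W, |inner ℝ v (siteOp x v)| ≤ 3 * (r ^ 4 * ε ^ 20) * ‖v‖ ^ 2 :=
      fun x v hv => abs_inner_self_le_of_orthogonal hW (siteOp_isSymmetric x)
        (a := EuclideanSpace.projₗ (x, false))
        (fun w hw => by
          rw [inner_siteOp_self, show w (x, false) = 0 from hw, zero_mul, mul_zero])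
        (hfirst x) hv
    have : Nontrivial W := Module.nontrivial_of_finrank_pos (R := ℝ) (by omega)
    obtain ⟨ψ, hψ⟩ := exists_norm_eq W zero_le_one
    obtain ⟨x, y, hxy⟩ := h.exists_le_abs_inner_resolvent hr (by positivity) hq
      (second_order_defect_lt_one hε hε1 (Nat.cast_nonneg _) hV hr hrε) ψ.2 hψ
    exact .inr ⟨(x, y), e, he, W, R, rfl, h, hq x, ψ, ψ.2, hψ, hxy⟩

lemma gapScale_le (hε : 0 ≤ ε) (hε1 : ε ≤ 1) (i : ℕ) : gapScale ε i ≤ ε ^ 53 :=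
  (gapScale_antitone hε hε1 i.zero_le).trans
    (pow_le_pow_of_le_one hε hε1 (by norm_num [gapExponent]))

lemma mem_crowdedSet_or_movableSet (hK : ∀ x y, |K x y| ≤ 1) (hε : 0 < ε)
    (hε1 : ε ≤ 1 / 10 ^ 6) (hV : Fintype.card ι * ε ≤ 1) (hu : ∀ x, |u x| ≤ 1)
    {b : OrthonormalBasis n ℝ (EuclideanSpace ℝ (ι × Bool))} {lam : n → ℝ}
    (hT : ∀ i, rotOp K u (b i) = lam i • b i) {α β : n} (hαβ : α ≠ β)
    (hgap : |lam α - lam β| ≤ gapScale ε 38) :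
    u ∈ crowdedSet K ε ∪
      ⋃ p ∈ Finset.range 38 ×ˢ Finset.range 40, movableSet K ε (gapScale ε p.1) p.2 := by
  have hε2 : ε ≤ 1 := hε1.trans (by norm_num)
  by_cases hcrowd : u ∈ crowdedSet K ε
  · exact .inl hcrowd
  · obtain ⟨i, hi, e, W, R, he, hW2, hW40, h⟩ :=
      exists_isSpectralCluster hK hε (hε1.trans (by norm_num)) hV hu hcrowd hT hαβ hgap
    rw [gapScale_succ] at h
    refine .inr (Set.mem_biUnion (x := (i, Module.finrank ℝ W)) ?_ ?_)
    · simp [hi, hW40]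
    · exact h.mem_movableSet he hε hε1 hV (pow_pos hε _)
        ((gapScale_le hε.le hε2 i).trans (pow_le_of_le_one hε.le hε2 (by norm_num))) hW2

lemma unifPi_exists_abs_sub_le_gapScale_le (hKsymm : K.IsSymm) (hK : ∀ x y, |K x y| ≤ 1)
    (hε : 0 < ε) (hε1 : ε ≤ 1 / 10 ^ 6) (hV : Fintype.card ι * ε ≤ 1) :
    unifPi ι {u | ∃ (b : OrthonormalBasis n ℝ (EuclideanSpace ℝ (ι × Bool))) (lam : n → ℝ),
        (∀ i, rotOp K u (b i) = lam i • b i) ∧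
          ∃ α β, α ≠ β ∧ |lam α - lam β| ≤ gapScale ε 38} ≤ ENNReal.ofReal ε := by
  have hε2 : ε ≤ 1 := hε1.trans (by norm_num)
  refine (measure_mono_ae ((ae_abs_le_one ι).mono fun u hu => ?_)).trans
    (b := unifPi ι (crowdedSet K ε ∪
      ⋃ p ∈ Finset.range 38 ×ˢ Finset.range 40, movableSet K ε (gapScale ε p.1) p.2)) ?_
  · rintro ⟨b, lam, hT, α, β, hαβ, hgap⟩
    exact mem_crowdedSet_or_movableSet hK hε hε1 hV hu hT hαβ hgap
  calc _ ≤ ENNReal.ofReal (ε ^ 2) +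
        ∑ p ∈ Finset.range 38 ×ˢ Finset.range 40, ENNReal.ofReal (2 * ε ^ 6) :=
        (measure_union_le _ _).trans (add_le_add (unifPi_crowdedSet_le hKsymm hε hε1 hV)
          ((measure_biUnion_finset_le _ _).trans (Finset.sum_le_sum fun p _ =>
            unifPi_movableSet_le hKsymm hε hε1 hV (pow_pos hε _) (gapScale_le hε.le hε2 p.1) p.2)))
    _ = ENNReal.ofReal (ε ^ 2 + 1520 * (2 * ε ^ 6)) := by
        rw [Finset.sum_const, Finset.card_product, Finset.card_range, Finset.card_range,
          ← ENNReal.ofReal_nsmul, ← ENNReal.ofReal_add (by positivity) (by positivity),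
          nsmul_eq_mul]
        norm_num
    _ ≤ ENNReal.ofReal ε := by
        refine ENNReal.ofReal_le_ofReal ?_
        calc ε ^ 2 + 1520 * (2 * ε ^ 6) = ε * ε + 3040 * (ε ^ 4 * ε * ε) := by ring
          _ ≤ 1 / 10 ^ 6 * ε + 3040 * (1 * (1 / 10 ^ 6) * ε) := by
            gcongr
            exact pow_le_one₀ hε.le hε2
          _ ≤ ε := by linarith

end LevelSpacing

section BlockHamiltonian

variable {ι : Type*} [Fintype ι] {d : ℕ} {γ : ℝ} {Λ : Finset (Fin d → ℤ)}

/-- The Hadamard rotation `2^(-1/2) [[1, 1], [1, -1]]` of the internal space at every site. It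
diagonalises the off-diagonal part of the blocks of `Ham` and turns `diag (u x, -u x)` into a flip
of the internal index, hence conjugates `Ham` to `rotOp`. -/
noncomputable def siteHadamard (ι : Type*) [Fintype ι] :
    EuclideanSpace ℝ (ι × Fin 2) →ₗ[ℝ] EuclideanSpace ℝ (ι × Bool) where
  toFun v := WithLp.toLp 2 fun s =>
    (√2)⁻¹ * (v (s.1, 0) + (if s.2 then -1 else 1) * v (s.1, 1))
  map_add' v w := by
    ext s
    simp only [PiLp.add_apply]
    ring
  map_smul' c v := by
    ext s
    simp only [PiLp.smul_apply, smul_eq_mul, RingHom.id_apply]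
    ring

lemma siteHadamard_apply (v : EuclideanSpace ℝ (ι × Fin 2)) (x : ι) (b : Bool) :
    siteHadamard ι v (x, b) = (√2)⁻¹ * (v (x, 0) + (if b then -1 else 1) * v (x, 1)) := rfl

lemma norm_siteHadamard (v : EuclideanSpace ℝ (ι × Fin 2)) : ‖siteHadamard ι v‖ = ‖v‖ := by
  rw [← sq_eq_sq₀ (norm_nonneg _) (norm_nonneg _), EuclideanSpace.real_norm_sq_eq,
    EuclideanSpace.real_norm_sq_eq, Fintype.sum_prod_type, Fintype.sum_prod_type]
  refine Finset.sum_congr rfl fun x _ => ?_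
  have hsqrt : (√2)⁻¹ ^ 2 = (1 / 2 : ℝ) := by
    rw [inv_pow, Real.sq_sqrt zero_le_two, one_div]
  rw [Fintype.sum_bool, Fin.sum_univ_two, siteHadamard_apply, siteHadamard_apply, mul_pow,
    mul_pow, hsqrt]
  simp only [if_true, Bool.false_eq_true, if_false]
  ring

/-- `siteHadamard` as an isometric equivalence. -/
noncomputable def siteHadamardEquiv (ι : Type*) [Fintype ι] :
    EuclideanSpace ℝ (ι × Fin 2) ≃ₗᵢ[ℝ] EuclideanSpace ℝ (ι × Bool) :=
  LinearIsometry.toLinearIsometryEquiv ⟨siteHadamard ι, norm_siteHadamard⟩ (by simp)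

/-- The hopping matrix of `Ham`: the entry `γ` between nearest neighbours in `Λ`. -/
def hopping (d : ℕ) (γ : ℝ) (Λ : Finset (Fin d → ℤ)) : Matrix {x // x ∈ Λ} {x // x ∈ Λ} ℝ :=
  fun x y => if dist1 (x : Fin d → ℤ) y = 1 then γ else 0

lemma dist1_comm (x y : Fin d → ℤ) : dist1 x y = dist1 y x :=
  Finset.sum_congr rfl fun i _ => by omega

lemma hopping_isSymm (d : ℕ) (γ : ℝ) (Λ : Finset (Fin d → ℤ)) : (hopping d γ Λ).IsSymm := by
  ext x y
  simp only [hopping, transpose_apply, dist1_comm]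

lemma hopping_self (x : {x // x ∈ Λ}) : hopping d γ Λ x x = 0 := by simp [hopping, dist1]

lemma abs_hopping_le (hγ : |γ| ≤ 1) (x y : {x // x ∈ Λ}) : |hopping d γ Λ x y| ≤ 1 := by
  rw [hopping]
  split_ifs
  · exact hγ
  · simp

lemma ham_apply (u : {x // x ∈ Λ} → ℝ) (x y : {x // x ∈ Λ}) (a c : Fin 2) :
    Ham d γ Λ u (x, a) (y, c) = (if a = c then hopping d γ Λ x y else 0) +
      if x = y then (if a = c then (if a = 0 then u x else -u x) else 1) else 0 := by
  rcases eq_or_ne x y with rfl | hxy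
  · simp [Ham, hopping_self]
  · simp only [Ham, hopping, if_neg hxy, add_zero]
    split_ifs <;> rfl

lemma ham_mulVec_apply (u : {x // x ∈ Λ} → ℝ) (v : {x // x ∈ Λ} × Fin 2 → ℝ) (x : {x // x ∈ Λ})
    (a : Fin 2) : (Ham d γ Λ u *ᵥ v) (x, a) = ∑ y, hopping d γ Λ x y * v (y, a) +
      ((if a = 0 then u x else -u x) * v (x, a) + v (x, 1 - a)) := by
  have hsite : ∀ y, ∑ c, Ham d γ Λ u (x, a) (y, c) * v (y, c) = hopping d γ Λ x y * v (y, a) +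
      if x = y then (if a = 0 then u x else -u x) * v (x, a) + v (x, 1 - a) else 0 := fun y => by
    rw [Fin.sum_univ_two, ham_apply, ham_apply]
    rcases eq_or_ne x y with rfl | hxy
    · fin_cases a <;> simp <;> ring
    · fin_cases a <;> simp [hxy]
  simp only [mulVec, dotProduct, Fintype.sum_prod_type, hsite, Finset.sum_add_distrib,
    Finset.sum_ite_eq, Finset.mem_univ, if_true]

lemma rotOp_siteHadamard (u : {x // x ∈ Λ} → ℝ) (v : EuclideanSpace ℝ ({x // x ∈ Λ} × Fin 2)) :
    rotOp (hopping d γ Λ) u (siteHadamard _ v) =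
      siteHadamard _ (WithLp.toLp 2 (Ham d γ Λ u *ᵥ v.ofLp)) := by
  ext ⟨x, b⟩
  simp only [rotOp_apply, siteHadamard_apply, ham_mulVec_apply]
  have hhop : ∑ y, hopping d γ Λ x y *
        ((√2)⁻¹ * (v (y, 0) + (if b then -1 else 1) * v (y, 1))) =
      (√2)⁻¹ * (∑ y, hopping d γ Λ x y * v (y, 0) +
        (if b then -1 else 1) * ∑ y, hopping d γ Λ x y * v (y, 1)) := by
    rw [Finset.mul_sum, ← Finset.sum_add_distrib, Finset.mul_sum]
    exact Finset.sum_congr rfl fun y _ => by ring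
  rw [hhop]
  cases b <;> simp <;> ring

lemma rotOp_map_eigenvectorBasis {u : {x // x ∈ Λ} → ℝ} (hH : (Ham d γ Λ u).IsHermitian)
    (i : {x // x ∈ Λ} × Fin 2) :
    rotOp (hopping d γ Λ) u (hH.eigenvectorBasis.map (siteHadamardEquiv _) i) =
      hH.eigenvalues i • hH.eigenvectorBasis.map (siteHadamardEquiv _) i := by
  rw [OrthonormalBasis.map_apply, ← map_smul]
  refine (rotOp_siteHadamard u _).trans (congrArg (siteHadamard _) ?_)
  rw [hH.mulVec_eigenvectorBasis]
  rfl

lemma unifPi_exists_abs_eigenvalues_sub_le (hγ : |γ| ≤ 1)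
    (hH : ∀ u : {x // x ∈ Λ} → ℝ, (Ham d γ Λ u).IsHermitian) {ε : ℝ} (hε : 0 < ε)
    (hε1 : ε ≤ 1 / 10 ^ 6) :
    unifPi {x // x ∈ Λ} {u | ∃ α β, α ≠ β ∧
        |(hH u).eigenvalues α - (hH u).eigenvalues β| ≤ gapScale ε 38} ≤
      ENNReal.ofReal (Λ.card * ε) := by
  rcases le_or_gt (Λ.card * ε) 1 with hsmall | hlarge
  · rcases Λ.eq_empty_or_nonempty with rfl | hΛ
    · simp
    · have hspacing := unifPi_exists_abs_sub_le_gapScale_le (n := {x // x ∈ Λ} × Fin 2)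
        (hopping_isSymm d γ Λ) (abs_hopping_le hγ) hε hε1 (by rwa [Fintype.card_coe])
      refine (measure_mono ?_).trans (hspacing.trans (ENNReal.ofReal_le_ofReal ?_))
      · rintro u ⟨α, β, hαβ, hgap⟩
        exact ⟨_, _, rotOp_map_eigenvectorBasis (hH u), α, β, hαβ, hgap⟩
      · exact le_mul_of_one_le_left hε.le (Nat.one_le_cast.2 hΛ.card_pos)
  · exact prob_le_one.trans (ENNReal.one_le_ofReal.2 hlarge.le)

end BlockHamiltonian

section LogarithmicRate

variable {γ δ : ℝ}

lemma gapScale_rpow_inv (hδ : 0 ≤ δ) (i : ℕ) :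
    gapScale (δ ^ (gapExponent i : ℝ)⁻¹) i = δ :=
  Real.rpow_inv_natCast_pow hδ (gapExponent_pos i).ne'

lemma rpow_inv_gapExponent_le {η : ℝ} (hη : 0 ≤ η) (hδ : 0 ≤ δ) {i : ℕ}
    (h : δ ≤ gapScale η i) : δ ^ (gapExponent i : ℝ)⁻¹ ≤ η := by
  rw [Real.rpow_inv_le_iff_of_pos hδ hη (Nat.cast_pos.2 (gapExponent_pos i)),
    Real.rpow_natCast]
  exact h

lemma abs_log_le_four_mul_of_le_rpow (hγ : 0 < γ) (hγ1 : γ ≤ 1) (hδ : 0 < δ)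
    (h : δ ≤ γ ^ (1 / 4 : ℝ)) : |Real.log γ| ≤ 4 * |Real.log δ| := by
  have hlog : Real.log δ ≤ 1 / 4 * Real.log γ :=
    (Real.log_le_log hδ h).trans_eq (Real.log_rpow hγ _)
  have hlogγ := Real.log_nonpos hγ.le hγ1
  rw [abs_of_nonpos hlogγ, abs_of_nonpos (by linarith)]
  linarith

lemma rpow_inv_le_exp_neg_log {k : ℝ} (hk : 0 < k) (hδ : 0 < δ) (hδ1 : δ ≤ 1)
    (hγδ : |Real.log γ| ≤ 4 * |Real.log δ|) :
    δ ^ k⁻¹ ≤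
      Real.exp (-(1 / (4 * k) * |Real.log γ| ^ (3 / 4 : ℝ) * |Real.log δ| ^ (1 / 4 : ℝ))) := by
  have hmean : |Real.log γ| ^ (3 / 4 : ℝ) * |Real.log δ| ^ (1 / 4 : ℝ) ≤ 4 * |Real.log δ| := by
    have := Real.geom_mean_le_arith_mean2_weighted (w₁ := 3 / 4) (w₂ := 1 / 4) (by norm_num)
      (by norm_num) (abs_nonneg (Real.log γ)) (abs_nonneg (Real.log δ)) (by norm_num)
    linarith [abs_nonneg (Real.log δ)]
  rw [Real.rpow_def_of_pos hδ, Real.exp_le_exp, mul_assoc, le_neg]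
  calc 1 / (4 * k) * (|Real.log γ| ^ (3 / 4 : ℝ) * |Real.log δ| ^ (1 / 4 : ℝ))
      ≤ 1 / (4 * k) * (4 * |Real.log δ|) := by gcongr
    _ = -(Real.log δ * k⁻¹) := by
      rw [abs_of_nonpos (Real.log_nonpos hδ.le hδ1)]
      field_simp

end LogarithmicRate

end BlockAnderson

open BlockAnderson in
theorem minimum_level_spacing_general :
    ∃ b γ₀ : ℝ, 0 < b ∧ 0 < γ₀ ∧
      ∀ (d : ℕ) (γ : ℝ), 0 < γ → γ ≤ γ₀ →
      ∀ Λ : Finset (Fin d → ℤ),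
      ∀ hherm : ∀ u : {x // x ∈ Λ} → ℝ, (Ham d γ Λ u).IsHermitian,
      ∀ δ : ℝ, 0 < δ → δ ≤ γ ^ ((1 : ℝ) / 4) / 4 →
      unifPi {x // x ∈ Λ}
          {u | ∃ α β : {x // x ∈ Λ} × Fin 2, α ≠ β ∧
            |(hherm u).eigenvalues α - (hherm u).eigenvalues β| < δ} ≤
        ENNReal.ofReal ((Λ.card : ℝ) *
          Real.exp (-(b * |Real.log γ| ^ ((3 : ℝ) / 4) * |Real.log δ| ^ ((1 : ℝ) / 4)))) := by
  have hk : (0 : ℝ) < gapExponent 38 := Nat.cast_pos.2 (gapExponent_pos 38)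
  have hη : 0 < gapScale (1 / 10 ^ 6) 38 := pow_pos (by norm_num) _
  have hη1 : gapScale (1 / 10 ^ 6) 38 ≤ 1 := pow_le_one₀ (by norm_num) (by norm_num)
  refine ⟨1 / (4 * gapExponent 38), gapScale (1 / 10 ^ 6) 38 ^ 4, by positivity, by positivity,
    fun d γ hγ hγ₀ Λ hherm δ hδ hδγ => ?_⟩
  have hγ1 : γ ≤ 1 := hγ₀.trans (pow_le_one₀ hη.le hη1)
  have hδγ' : δ ≤ γ ^ (1 / 4 : ℝ) := hδγ.trans (by linarith [Real.rpow_nonneg hγ.le (1 / 4)])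
  have hδη : δ ≤ gapScale (1 / 10 ^ 6) 38 := hδγ'.trans <| by
    rw [one_div, Real.rpow_inv_le_iff_of_pos hγ.le hη.le zero_lt_four]
    exact_mod_cast hγ₀
  set ε := δ ^ (gapExponent 38 : ℝ)⁻¹
  calc _ ≤ unifPi {x // x ∈ Λ} {u | ∃ α β, α ≠ β ∧
          |(hherm u).eigenvalues α - (hherm u).eigenvalues β| ≤ gapScale ε 38} := by
        rw [gapScale_rpow_inv hδ.le]
        exact measure_mono fun u ⟨α, β, hαβ, hlt⟩ => ⟨α, β, hαβ, hlt.le⟩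
    _ ≤ ENNReal.ofReal (Λ.card * ε) :=
        unifPi_exists_abs_eigenvalues_sub_le ((abs_of_pos hγ).trans_le hγ1) hherm
          (Real.rpow_pos_of_pos hδ _) (rpow_inv_gapExponent_le (by norm_num) hδ.le hδη)
    _ ≤ _ := by
        gcongr
        exact rpow_inv_le_exp_neg_log hk hδ (hδη.trans hη1)
          (abs_log_le_four_mul_of_le_rpow hγ hγ1 hδ hδγ')

/-- minimum level spacing. There are `b, γ₀ > 0` such that for all
`0 < γ ≤ γ₀`, every rectangle `Λ`, and every `0 < δ ≤ γ^{1/4}/4`, the probability that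
two eigenvalues of `H(u)` (counted with multiplicity) are within `δ` of each other is
at most `|Λ|·exp(-b·|log γ|^{3/4}·|log δ|^{1/4})`. -/
theorem minimum_level_spacing (d : ℕ) (hd : 1 ≤ d) :
    ∃ b γ₀ : ℝ, 0 < b ∧ 0 < γ₀ ∧
      ∀ γ : ℝ, 0 < γ → γ ≤ γ₀ →
      ∀ Λ : Finset (Fin d → ℤ), (∃ a b', Λ = Finset.Icc a b') →
      ∀ hherm : ∀ u : {x // x ∈ Λ} → ℝ, (Ham d γ Λ u).IsHermitian,
      ∀ δ : ℝ, 0 < δ → δ ≤ γ ^ ((1 : ℝ) / 4) / 4 →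
      unifPi {x // x ∈ Λ}
          {u | ∃ α β : {x // x ∈ Λ} × Fin 2, α ≠ β ∧
            |(hherm u).eigenvalues α - (hherm u).eigenvalues β| < δ} ≤
        ENNReal.ofReal ((Λ.card : ℝ) *
          Real.exp (-(b * |Real.log γ| ^ ((3 : ℝ) / 4) * |Real.log δ| ^ ((1 : ℝ) / 4)))) := by
  obtain ⟨b, γ₀, hb, hγ₀, h⟩ := minimum_level_spacing_general
  exact ⟨b, γ₀, hb, hγ₀, fun γ hγ hle Λ _ => h d γ hγ hle Λ⟩
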